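/- arXiv:1912.09815 — 3 statements merged into one kernel-verified Lean document; each statement's English description precedes it below -/
import Mathlib

section
/- Let G be a countable abelian group of finite exponent. Then the following are equivalent: (1) there exists a pseudo-Siggers polymorphism of (G, ≠), i.e., an additive homomorphism s : (Fin 6 → G) →+ G (tuples with pointwise addition) that preserves ≠, together with injective additive endomorphisms e₁, e₂ : G →+ G such that e₁(s(x,y,x,z,y,z)) = e₂(s(y,x,z,x,z,y)) for all x,y,z ∈ G; (2) there exists n ≥ 1 such that G is bi-embeddable with ⨁_ℕ ZMod n, or G is bi-embeddable with (⨁_ℕ ZMod n) × ZMod (2*n). -/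
/-!
Let `(G, ≠)` have a pseudo-Siggers polymorphism `s`. If `kG` is finite with more than two elements,
then `s` restricts to an operation on `kG` that preserves `≠`, and on a finite group of more than
two elements every such operation depends on one coordinate only. As no coordinate of
`(x, y, x, z, y, z)` equals that of `(y, x, z, x, z, y)`, this contradicts the identity, so a finite
`kG` has at most two elements. Let `E` be the exponent of `G`. Either `(E / p)G` is infinite for all
primes `p ∣ E`, and then `n = E` gives the first case, or some `(E / p)G` is finite; it contains an
element of order `p`, so `p = 2` and `n = E / 2` gives the second case. The embeddings are assembled
from the `p`-torsion subgroups, which are vector spaces over `ZMod p`, and extended by injectivity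
of `⨁ ZMod n` over `ZMod n`.

Conversely, in both cases bi-embeddability makes `M = ⨁ ZMod n` or `M = (⨁ ZMod n) × ZMod (2 * n)`
a direct summand of `G`, and a pseudo-Siggers polymorphism of `M` transfers along an embedding
`G → M` and the retraction `G → M`. On `M` there is room for an almost injective operation,
because `⨁ ZMod n` is isomorphic to its finite powers.
-/

open Function

/-- A map `F : M ^ ι → M` preserves `≠`. -/
def PreservesNe {ι M : Type*} (F : (ι → M) → M) : Prop :=
  ∀ p q : ι → M, (∀ i, p i ≠ q i) → F p ≠ F q

/-- `(G, ≠)` has a pseudo-Siggers polymorphism. -/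
def HasPseudoSiggers (G : Type*) [AddCommGroup G] : Prop :=
  ∃ (s : (Fin 6 → G) →+ G) (e₁ e₂ : G →+ G), PreservesNe s ∧ Injective e₁ ∧ Injective e₂ ∧
    ∀ x y z : G, e₁ (s ![x, y, x, z, y, z]) = e₂ (s ![y, x, z, x, z, y])

/-- Each of `A` and `B` embeds into the other. -/
def AddBiembeddable (A B : Type*) [AddCommGroup A] [AddCommGroup B] : Prop :=
  ∃ (f : A →+ B) (g : B →+ A), Injective f ∧ Injective g

/-- The subgroup `kG` of multiples of `k`. -/
abbrev nsmulRange (G : Type*) [AddCommGroup G] (k : ℕ) : AddSubgroup G :=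
  (nsmulAddMonoidHom k : G →+ G).range

/-- For `n ≠ 0`, this says that `Q` is an injective `ZMod n`-module, expressed through divisibility:
`n` kills `Q`, and an element is divisible by a divisor `d` of `n` as soon as `n / d` kills it. -/
structure IsInjectiveMod (n : ℕ) (Q : Type*) [AddCommGroup Q] : Prop where
  nsmul_eq_zero (q : Q) : n • q = 0
  exists_nsmul_eq {d e : ℕ} (hde : d * e = n) {q : Q} (hq : e • q = 0) : ∃ q', d • q' = q

theorem nsmul_eq_zero_of_injective {A B : Type*} [AddCommGroup A] [AddCommGroup B] {n : ℕ}
    (hB : ∀ b : B, n • b = 0) {f : A →+ B} (hf : Injective f) (a : A) : n • a = 0 :=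
  hf (by rw [map_nsmul, hB, map_zero])

theorem nsmul_quotient_nsmulRange_eq_zero {A : Type*} [AddCommGroup A] (n : ℕ)
    (q : A ⧸ nsmulRange A n) : n • q = 0 := by
  obtain ⟨a, rfl⟩ := QuotientAddGroup.mk_surjective q
  exact (QuotientAddGroup.eq_zero_iff _).2 ⟨a, rfl⟩

theorem AddBiembeddable.congr_right {A B C : Type*} [AddCommGroup A] [AddCommGroup B]
    [AddCommGroup C] (e : B ≃+ C) : AddBiembeddable A B ↔ AddBiembeddable A C :=
  ⟨fun ⟨f, g, hf, hg⟩ => ⟨e.toAddMonoidHom.comp f, g.comp e.symm.toAddMonoidHom,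
      e.injective.comp hf, hg.comp e.symm.injective⟩,
    fun ⟨f, g, hf, hg⟩ => ⟨e.symm.toAddMonoidHom.comp f, g.comp e.toAddMonoidHom,
      e.symm.injective.comp hf, hg.comp e.injective⟩⟩

theorem preservesNe_iff_map_ne_zero {ι G : Type*} [AddCommGroup G] (s : (ι → G) →+ G) :
    PreservesNe s ↔ ∀ p : ι → G, (∀ i, p i ≠ 0) → s p ≠ 0 := by
  refine ⟨fun hs p hp => by simpa using hs p 0 hp, fun hs p q hpq => ?_⟩
  rw [← sub_ne_zero, ← map_sub]
  exact hs _ fun i => sub_ne_zero.2 (hpq i)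

theorem comp_vec_six {α β : Type*} (f : α → β) (a b c d e k : α) :
    f ∘ ![a, b, c, d, e, k] = ![f a, f b, f c, f d, f e, f k] := by
  funext i
  fin_cases i <;> rfl

section Injectivity

variable {n : ℕ} {Q : Type*} [AddCommGroup Q]

theorem isInjectiveMod_zmod (n : ℕ) [NeZero n] : IsInjectiveMod n (ZMod n) where
  nsmul_eq_zero := by simp
  exists_nsmul_eq {d e} hde q hq := by
    have he : 0 < e := Nat.pos_of_ne_zero (right_ne_zero_of_mul (hde ▸ NeZero.ne n))
    obtain ⟨a, rfl⟩ := ZMod.natCast_zmod_surjective q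
    rw [nsmul_eq_mul, ← Nat.cast_mul, ZMod.natCast_eq_zero_iff, ← hde, mul_comm d] at hq
    obtain ⟨k, rfl⟩ := Nat.dvd_of_mul_dvd_mul_left he hq
    exact ⟨k, by simp⟩

theorem IsInjectiveMod.finsupp (hQ : IsInjectiveMod n Q) (ι : Type*) :
    IsInjectiveMod n (ι →₀ Q) where
  nsmul_eq_zero q := by ext i; simp [hQ.nsmul_eq_zero]
  exists_nsmul_eq {d e} hde q hq := by
    suffices q ∈ nsmulRange (ι →₀ Q) d from this
    rw [← q.sum_single]
    refine sum_mem fun i _ => ?_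
    obtain ⟨c, hc⟩ := hQ.exists_nsmul_eq hde (q := q i) (by simpa using DFunLike.congr_fun hq i)
    exact ⟨Finsupp.single i c, by simp [hc]⟩

theorem IsInjectiveMod.baer [Module (ZMod n) Q] (hQ : IsInjectiveMod n Q) :
    Module.Baer (ZMod n) Q := by
  intro I g
  obtain ⟨d, hd⟩ : ∃ d : ℕ, ∀ z : ℤ, (z : ZMod n) ∈ I ↔ (d : ℤ) ∣ z := by
    obtain ⟨a, ha⟩ := (IsPrincipalIdealRing.principal
      (I.comap (Int.castRingHom (ZMod n)))).principal
    refine ⟨a.natAbs, fun z => ?_⟩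
    rw [Int.natAbs_dvd, ← Ideal.mem_span_singleton, ← Ideal.submodule_span_eq, ← ha]
    rfl
  have hdI : (d : ZMod n) ∈ I := by simpa using (hd d).2 dvd_rfl
  obtain ⟨e, he⟩ : d ∣ n := by
    rw [← Int.natCast_dvd_natCast, ← hd]
    simp
  have hker : e • (⟨d, hdI⟩ : I) = 0 := by
    ext
    simp [← Nat.cast_mul, mul_comm e, ← he]
  obtain ⟨q, hq⟩ := hQ.exists_nsmul_eq he.symm (q := g ⟨d, hdI⟩)
    (by rw [← map_nsmul, hker, map_zero])
  refine ⟨LinearMap.toSpanSingleton (ZMod n) Q q, fun x hx => ?_⟩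
  obtain ⟨z, rfl⟩ := ZMod.intCast_surjective x
  obtain ⟨k, rfl⟩ := (hd z).1 hx
  have hgen : (⟨((d * k : ℤ) : ZMod n), hx⟩ : I) = (k : ZMod n) • ⟨d, hdI⟩ := by
    ext
    simp [mul_comm]
  rw [hgen, map_smul, ← hq]
  simp [mul_comm, mul_smul, Nat.cast_smul_eq_nsmul]

theorem IsInjectiveMod.exists_extension {A B : Type*} [AddCommGroup A] [AddCommGroup B]
    (hQ : IsInjectiveMod n Q) (i : B →+ A) (φ : B →+ Q) (h : ∀ b a, i b = n • a → φ b = 0) :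
    ∃ ψ : A →+ Q, ∀ b, ψ (i b) = φ b := by
  let π := QuotientAddGroup.mk' (nsmulRange A n)
  let j := QuotientAddGroup.kerLift (π.comp i)
  have hj : Injective j := QuotientAddGroup.kerLift_injective _
  have hker : (π.comp i).ker ≤ φ.ker := fun b hb => by
    obtain ⟨a, ha⟩ := (QuotientAddGroup.eq_zero_iff _).1 hb
    exact h b a ha.symm
  have hA := nsmul_quotient_nsmulRange_eq_zero (A := A) n
  let := AddCommGroup.zmodModule hA
  let := AddCommGroup.zmodModule (nsmul_eq_zero_of_injective hA hj)
  let := AddCommGroup.zmodModule hQ.nsmul_eq_zero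
  obtain ⟨ψ, hψ⟩ := hQ.baer.extension_property (j.toZModLinearMap n) hj
    ((QuotientAddGroup.lift _ φ hker).toZModLinearMap n)
  exact ⟨ψ.toAddMonoidHom.comp π, fun b => LinearMap.congr_fun hψ (b : B ⧸ (π.comp i).ker)⟩

end Injectivity

section Sufficiency

theorem nonempty_pi_prod_finsupp_addEquiv (ι A : Type*) [Finite ι] [Nonempty ι]
    [AddCommGroup A] : Nonempty ((ι → (ℕ →₀ A) × (ℕ →₀ A)) ≃+ (ℕ →₀ A)) := by
  obtain ⟨e⟩ := nonempty_equiv_of_countable (α := ι × (ℕ ⊕ ℕ)) (β := ℕ)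
  exact ⟨(AddEquiv.piCongrRight fun _ => Finsupp.sumFinsuppAddEquivProdFinsupp.symm).trans <|
    Finsupp.addEquivFunOnFinite.symm.trans <|
    Finsupp.curryAddEquiv.symm.trans <| Finsupp.domCongr e⟩

theorem HasPseudoSiggers.of_retract {G M : Type*} [AddCommGroup G] [AddCommGroup M]
    (hM : HasPseudoSiggers M) {f : G →+ M} (hf : Injective f) {g : M →+ G} {r : G →+ M}
    (hr : LeftInverse r g) : HasPseudoSiggers G := by
  obtain ⟨s, e₁, e₂, hs, he₁, he₂, he⟩ := hM
  -- Along `G = g M ⊕ ker r`, extend an endomorphism of `M` by the identity on `ker r`.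
  let E (e : M →+ M) : G →+ G := g.comp (e.comp r) + (AddMonoidHom.id G - g.comp r)
  have hE (e : M →+ M) (a : G) : E e a = g (e (r a)) + (a - g (r a)) := rfl
  have hEg (e : M →+ M) (m : M) : E e (g m) = g (e m) := by simp [hE, hr m]
  have hE_inj {e : M →+ M} (h : Injective e) : Injective (E e) := by
    rw [injective_iff_map_eq_zero] at h ⊢
    intro a ha
    have hra : r a = 0 := h _ (by simpa [hE, hr _] using congrArg r ha)
    simpa [hE, hra] using ha
  refine ⟨g.comp (s.comp (f.compLeft (Fin 6))), E e₁, E e₂, fun p q hpq h => ?_,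
    hE_inj he₁, hE_inj he₂, fun x y z => ?_⟩
  · exact hs (f ∘ p) (f ∘ q) (fun i => hf.ne (hpq i)) (hr.injective h)
  · change E e₁ (g (s (f ∘ _))) = E e₂ (g (s (f ∘ _)))
    rw [hEg, hEg, comp_vec_six, comp_vec_six, he]

/-- The permutation of the coordinates carrying `(x, y, x, z, y, z)` to `(y, x, z, x, z, y)`. -/
def siggersSwap : Equiv.Perm (Fin 6) := Equiv.swap 0 1 * Equiv.swap 2 3 * Equiv.swap 4 5

theorem vecCons_comp_siggersSwap_symm {α : Type*} (x y z : α) :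
    ![x, y, x, z, y, z] ∘ siggersSwap.symm = ![y, x, z, x, z, y] := by
  funext i
  fin_cases i <;> rfl

theorem add_add_ne_zero_of_subsingleton {C : Type*} [AddCommGroup C] {H : AddSubgroup C}
    (hH : ((H : Set C) \ {0}).Subsingleton) {a b c : C} (ha : a ∈ (H : Set C) \ {0})
    (hb : b ∈ (H : Set C) \ {0}) (hc : c ∈ (H : Set C) \ {0}) : a + b + c ≠ 0 := by
  have hneg : -a = a := hH ⟨H.neg_mem ha.1, neg_ne_zero.2 ha.2⟩ ha
  rw [hH hb ha, hH hc ha, ← sub_neg_eq_add, hneg, add_sub_cancel_right]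
  exact ha.2

/-- The operation is `s(k, c) = (t(k, ρ c), c₀ + c₃ + c₄)`. Swapping the coordinates by
`siggersSwap` acts on the first component through `t`, while `c₀ + c₃ + c₄` takes the same value
`x + y + z` at `(x, y, x, z, y, z)` and `(y, x, z, x, z, y)`. -/
theorem hasPseudoSiggers_prod {K P C : Type*} [AddCommGroup K] [AddCommGroup P] [AddCommGroup C]
    (t : (Fin 6 → K × P) ≃+ K) (ρ : C →+ P) (hρ : ((ρ.ker : Set C) \ {0}).Subsingleton) :
    HasPseudoSiggers (K × C) := by
  let φ : (Fin 6 → K × C) →+ (Fin 6 → K × P) := ((AddMonoidHom.id K).prodMap ρ).compLeft (Fin 6)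
  let c (i : Fin 6) : (Fin 6 → K × C) →+ C := (AddMonoidHom.snd K C).comp (Pi.evalAddMonoidHom _ i)
  let e : K ≃+ K := t.symm.trans ((AddEquiv.arrowCongr siggersSwap (AddEquiv.refl _)).trans t)
  have he (p) : e (t (φ p)) = t (φ (p ∘ siggersSwap.symm)) := by
    simp only [e, AddEquiv.trans_apply, AddEquiv.symm_apply_apply]
    rfl
  refine ⟨(t.toAddMonoidHom.comp φ).prod (c 0 + c 3 + c 4),
    (e.prodCongr (AddEquiv.refl C)).toAddMonoidHom, AddMonoidHom.id _, ?_, AddEquiv.injective _,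
    injective_id, fun x y z => Prod.ext ?_ ?_⟩
  · rw [preservesNe_iff_map_ne_zero]
    intro p hp hsp
    have hφ (i) : ((p i).1, ρ (p i).2) = 0 :=
      congrFun ((map_eq_zero_iff t t.injective).1 (congrArg Prod.fst hsp)) i
    have hmem (i) : (p i).2 ∈ (ρ.ker : Set C) \ {0} :=
      ⟨(Prod.mk.inj (hφ i)).2, fun h0 => hp i (Prod.ext (Prod.mk.inj (hφ i)).1 h0)⟩
    exact add_add_ne_zero_of_subsingleton hρ (hmem 0) (hmem 3) (hmem 4) (congrArg Prod.snd hsp)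
  · exact (he _).trans (by rw [vecCons_comp_siggersSwap_symm]; rfl)
  · change (x + z + y).2 = (y + x + z).2
    rw [add_comm, add_assoc]

theorem hasPseudoSiggers_finsupp (A : Type*) [AddCommGroup A] : HasPseudoSiggers (ℕ →₀ A) := by
  obtain ⟨t⟩ := nonempty_pi_prod_finsupp_addEquiv (Fin 6) A
  let e : (ℕ →₀ A) × PUnit.{1} ≃+ (ℕ →₀ A) := AddEquiv.prodUnique
  have h : HasPseudoSiggers ((ℕ →₀ A) × PUnit.{1}) :=
    hasPseudoSiggers_prod t (0 : PUnit →+ _) Set.subsingleton_of_subsingleton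
  exact h.of_retract (f := e.symm.toAddMonoidHom) (g := e.toAddMonoidHom) e.symm.injective
    (r := e.symm.toAddMonoidHom) e.left_inv

theorem natCast_mul_intCast_zmod_two_mul (n : ℕ) (k : ℤ) :
    (n * k : ZMod (2 * n)) = 0 ∨ (n * k : ZMod (2 * n)) = n := by
  have h2n : (2 * n : ZMod (2 * n)) = 0 := by exact_mod_cast ZMod.natCast_self (2 * n)
  obtain ⟨l, rfl⟩ | ⟨l, rfl⟩ := Int.even_or_odd k
  · left
    push_cast
    linear_combination (l : ZMod (2 * n)) * h2n
  · right
    push_cast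
    linear_combination (l : ZMod (2 * n)) * h2n

theorem ker_castHom_diff_zero_subsingleton (n : ℕ) :
    (((ZMod.castHom (dvd_mul_left n 2) (ZMod n)).toAddMonoidHom.ker :
      Set (ZMod (2 * n))) \ {0}).Subsingleton := by
  refine Set.subsingleton_singleton (a := (n : ZMod (2 * n))) |>.anti fun c ⟨hc, hc0⟩ => ?_
  obtain ⟨z, rfl⟩ := ZMod.intCast_surjective c
  obtain ⟨k, rfl⟩ := (ZMod.intCast_zmod_eq_zero_iff_dvd z n).1 (by simpa using hc)
  push_cast at hc0 ⊢
  exact (natCast_mul_intCast_zmod_two_mul n k).resolve_left hc0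

theorem hasPseudoSiggers_finsupp_prod_zmod (n : ℕ) :
    HasPseudoSiggers ((ℕ →₀ ZMod n) × ZMod (2 * n)) := by
  obtain ⟨t⟩ := nonempty_pi_prod_finsupp_addEquiv (Fin 6) (ZMod n)
  let ρ := (Finsupp.singleAddHom (0 : ℕ)).comp
    (ZMod.castHom (dvd_mul_left n 2) (ZMod n)).toAddMonoidHom
  refine hasPseudoSiggers_prod t ρ ((ker_castHom_diff_zero_subsingleton n).anti ?_)
  exact Set.sdiff_subset_sdiff_left fun c hc => Finsupp.single_eq_zero.1 hc

theorem nsmulRange_diff_zero_subsingleton_of_injective {A B : Type*} [AddCommGroup A]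
    [AddCommGroup B] {n : ℕ} (hB : ((nsmulRange B n : Set B) \ {0}).Subsingleton)
    {f : A →+ B} (hf : Injective f) : ((nsmulRange A n : Set A) \ {0}).Subsingleton := by
  have hmaps : Set.MapsTo f (nsmulRange A n \ {0}) (nsmulRange B n \ {0}) := by
    rintro _ ⟨⟨a, rfl⟩, ha0⟩
    exact ⟨⟨f a, (map_nsmul f n a).symm⟩, (map_ne_zero_iff f hf).2 ha0⟩
  exact fun x hx y hy => hf (hB (hmaps hx) (hmaps hy))

theorem nsmulRange_finsupp_prod_zmod_diff_zero_subsingleton (n : ℕ) :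
    ((nsmulRange ((ℕ →₀ ZMod n) × ZMod (2 * n)) n : Set ((ℕ →₀ ZMod n) × ZMod (2 * n))) \
      {0}).Subsingleton := by
  refine Set.subsingleton_singleton (a := (0, (n : ZMod (2 * n)))) |>.anti ?_
  rintro _ ⟨⟨⟨k, c⟩, rfl⟩, h0⟩
  obtain ⟨z, rfl⟩ := ZMod.intCast_surjective c
  have hk : n • k = 0 := by
    ext
    simp
  simp only [nsmulAddMonoidHom_apply, Prod.smul_mk, hk, nsmul_eq_mul, Set.mem_singleton_iff,
    Prod.mk_eq_zero, Prod.mk.injEq, true_and] at h0 ⊢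
  exact (natCast_mul_intCast_zmod_two_mul n z).resolve_left h0

theorem two_mul_nsmul_finsupp_prod_zmod {n : ℕ} (m : (ℕ →₀ ZMod n) × ZMod (2 * n)) :
    (2 * n) • m = 0 := by
  refine Prod.ext ?_ ?_
  · ext
    simp
  · rw [Prod.smul_snd, nsmul_eq_mul, ZMod.natCast_self, zero_mul, Prod.snd_zero]

section Retractions

variable {G : Type*} [AddCommGroup G] {n : ℕ} [NeZero n]

theorem exists_leftInverse_of_injective_finsupp_zmod {f : G →+ (ℕ →₀ ZMod n)} (hf : Injective f)
    {g : (ℕ →₀ ZMod n) →+ G} (hg : Injective g) :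
    ∃ r : G →+ (ℕ →₀ ZMod n), LeftInverse r g := by
  have hinj := (isInjectiveMod_zmod n).finsupp ℕ
  refine hinj.exists_extension g (AddMonoidHom.id _) fun k a hka => ?_
  rw [nsmul_eq_zero_of_injective hinj.nsmul_eq_zero hf] at hka
  exact (map_eq_zero_iff g hg).1 hka

/-- In `G` the subgroup `nG` is trivial or generated by `g (0, n)`, so it does not meet the image
of the first factor, which therefore splits off although `n` does not kill `G`. -/
theorem exists_leftInverse_of_injective_finsupp_prod_zmod
    {f : G →+ (ℕ →₀ ZMod n) × ZMod (2 * n)} (hf : Injective f)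
    {g : (ℕ →₀ ZMod n) × ZMod (2 * n) →+ G} (hg : Injective g) :
    ∃ r : G →+ (ℕ →₀ ZMod n) × ZMod (2 * n), LeftInverse r g := by
  have hnG := nsmulRange_diff_zero_subsingleton_of_injective
    (nsmulRange_finsupp_prod_zmod_diff_zero_subsingleton n) hf
  have hfst (m a) (hma : g m = n • a) : m.1 = 0 := by
    by_cases hm : m = 0
    · rw [hm, Prod.fst_zero]
    have hu : g (0, (n : ZMod (2 * n))) = n • g (0, 1) := by simp [← map_nsmul]
    have hu0 : ((0, (n : ZMod (2 * n))) : (ℕ →₀ ZMod n) × ZMod (2 * n)) ≠ 0 := by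
      simpa [ZMod.natCast_eq_zero_iff] using
        Nat.not_dvd_of_pos_of_lt (NeZero.pos n) (by have := NeZero.pos n; omega)
    have hmu : g m = g (0, (n : ZMod (2 * n))) :=
      hnG ⟨⟨a, hma.symm⟩, (map_ne_zero_iff g hg).2 hm⟩
        ⟨⟨_, hu.symm⟩, (map_ne_zero_iff g hg).2 hu0⟩
    rw [hg hmu]
  have hsnd (m a) (hma : g m = (2 * n) • a) : m.2 = 0 := by
    rw [nsmul_eq_zero_of_injective two_mul_nsmul_finsupp_prod_zmod hf] at hma
    rw [(map_eq_zero_iff g hg).1 hma, Prod.snd_zero]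
  obtain ⟨r₁, hr₁⟩ :=
    ((isInjectiveMod_zmod n).finsupp ℕ).exists_extension g (AddMonoidHom.fst _ _) hfst
  obtain ⟨r₂, hr₂⟩ :=
    (isInjectiveMod_zmod (2 * n)).exists_extension g (AddMonoidHom.snd _ _) hsnd
  exact ⟨r₁.prod r₂, fun m => Prod.ext (hr₁ m) (hr₂ m)⟩

theorem HasPseudoSiggers.of_addBiembeddable_finsupp_zmod
    (h : AddBiembeddable G (ℕ →₀ ZMod n)) : HasPseudoSiggers G := by
  obtain ⟨f, g, hf, hg⟩ := h
  obtain ⟨r, hr⟩ := exists_leftInverse_of_injective_finsupp_zmod hf hg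
  exact (hasPseudoSiggers_finsupp (ZMod n)).of_retract hf hr

theorem HasPseudoSiggers.of_addBiembeddable_finsupp_prod_zmod
    (h : AddBiembeddable G ((ℕ →₀ ZMod n) × ZMod (2 * n))) : HasPseudoSiggers G := by
  obtain ⟨f, g, hf, hg⟩ := h
  obtain ⟨r, hr⟩ := exists_leftInverse_of_injective_finsupp_prod_zmod hf hg
  exact (hasPseudoSiggers_finsupp_prod_zmod n).of_retract hf hr

end Retractions

end Sufficiency

section Necessity

theorem PreservesNe.exists_injective_comp_single {ι W : Type*} [Finite ι] [DecidableEq ι]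
    [AddCommGroup W] {s : (ι → W) →+ W} (hs : PreservesNe s) :
    ∃ j, Injective (s.comp (AddMonoidHom.single (fun _ : ι => W) j)) := by
  have := Fintype.ofFinite ι
  by_contra! h
  simp only [injective_iff_map_eq_zero, not_forall] at h
  choose d hd hd0 using h
  refine (preservesNe_iff_map_ne_zero s).1 hs d hd0 ?_
  rw [← Finset.univ_sum_single d, map_sum]
  exact Finset.sum_eq_zero fun j _ => hd j

/-- A coordinate `j` on which `s` is injective absorbs all others: if `s d = σ w` with `d i ≠ 0` for
`i ≠ j`, then `s` kills `d` with its `j`-th entry lowered by `w`, so that entry must vanish. As `W`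
has more than two elements, differences of such tuples `d` exhaust `ι → W`. -/
theorem PreservesNe.exists_eq_apply {ι W : Type*} [Finite ι] [AddCommGroup W]
    (hW : 2 < Nat.card W) {s : (ι → W) →+ W} (hs : PreservesNe s) :
    ∃ (j : ι) (σ : W →+ W), Injective σ ∧ ∀ p, s p = σ (p j) := by
  classical
  have := Nat.finite_of_card_ne_zero (Nat.ne_zero_of_lt hW)
  obtain ⟨j, hσ⟩ := hs.exists_injective_comp_single
  let σ := s.comp (AddMonoidHom.single (fun _ : ι => W) j)
  have h_nonzero (d : ι → W) (hd : ∀ i ≠ j, d i ≠ 0) : s d = σ (d j) := by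
    obtain ⟨w, hw⟩ := Finite.surjective_of_injective hσ (s d)
    by_contra hne
    refine (preservesNe_iff_map_ne_zero s).1 hs (d - Pi.single j w) (fun i => ?_) ?_
    · obtain rfl | hij := eq_or_ne i j
      · rw [Pi.sub_apply, Pi.single_eq_same, sub_ne_zero]
        rintro rfl
        exact hne hw.symm
      · simpa [hij] using hd i hij
    · rw [map_sub, ← hw]
      exact sub_self _
  have h_avoid : ∀ a b : W, ∃ u, u ≠ a ∧ u ≠ b :=
    ENat.exists_ne_ne_of_three_le (by rw [ENat.card_eq_coe_natCard]; exact mod_cast hW)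
  refine ⟨j, σ, hσ, fun p => ?_⟩
  choose u hu hup using fun i => h_avoid 0 (-p i)
  calc
    s p = s (u + p) - s u := by rw [map_add, add_sub_cancel_left]
    _ = σ ((u + p) j) - σ (u j) := by
      rw [h_nonzero u fun i _ => hu i,
        h_nonzero (u + p) fun i _ h0 => hup i (eq_neg_of_add_eq_zero_left h0)]
    _ = σ (p j) := by rw [Pi.add_apply, map_add, add_sub_cancel_left]

theorem pi_map_mem_nsmulRange {ι G H : Type*} [AddCommGroup G] [AddCommGroup H]
    (s : (ι → G) →+ H) {k : ℕ} {p : ι → G} (hp : ∀ i, p i ∈ nsmulRange G k) :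
    s p ∈ nsmulRange H k := by
  choose q hq using hp
  exact ⟨s q, by rw [nsmulAddMonoidHom_apply, ← map_nsmul]; exact congrArg s (funext hq)⟩

/-- This restricts only finite `kG`, since `Nat.card` of an infinite type is `0`. -/
theorem HasPseudoSiggers.card_nsmulRange_le_two {G : Type*} [AddCommGroup G]
    (hG : HasPseudoSiggers G) (k : ℕ) : Nat.card (nsmulRange G k) ≤ 2 := by
  obtain ⟨s, e₁, e₂, hs, he₁, he₂, he⟩ := hG
  by_contra! hW
  let W := nsmulRange G k
  let sW : (Fin 6 → W) →+ W := (s.comp (W.subtype.compLeft (Fin 6))).codRestrict W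
    fun p => pi_map_mem_nsmulRange s fun i => (p i).2
  have hsW : PreservesNe sW := fun p q hpq h =>
    hs _ _ (fun i => W.subtype_injective.ne (hpq i)) (congrArg W.subtype h)
  obtain ⟨j, σ, hσ, hj⟩ := hsW.exists_eq_apply hW
  have h_iff (x y z : W) : ![x, y, x, z, y, z] j = 0 ↔ ![y, x, z, x, z, y] j = 0 := by
    have h : e₁ (sW ![x, y, x, z, y, z]) = e₂ (sW ![y, x, z, x, z, y]) := by
      change e₁ (s (W.subtype ∘ _)) = e₂ (s (W.subtype ∘ _))
      rw [comp_vec_six, comp_vec_six, he]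
    rw [hj, hj] at h
    have h_zero {e : G →+ G} (he : Injective e) (w : W) : e (σ w) = 0 ↔ w = 0 := by
      rw [map_eq_zero_iff e he, ZeroMemClass.coe_eq_zero, map_eq_zero_iff σ hσ]
    rw [← h_zero he₁, h, h_zero he₂]
  have := Nat.finite_of_card_ne_zero (Nat.ne_zero_of_lt hW)
  have : Nontrivial W := Finite.one_lt_card_iff_nontrivial.1 (one_lt_two.trans hW)
  obtain ⟨v, hv⟩ := exists_ne (0 : W)
  have hx := h_iff v 0 0
  have hy := h_iff 0 v 0
  have hz := h_iff 0 0 v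
  fin_cases j <;> simp [hv] at hx hy hz

theorem HasPseudoSiggers.nsmulRange_diff_zero_subsingleton {G : Type*} [AddCommGroup G]
    (hG : HasPseudoSiggers G) (k : ℕ) [Finite (nsmulRange G k)] :
    ((nsmulRange G k : Set G) \ {0}).Subsingleton := by
  have : Finite (nsmulRange G k : Set G) := ‹_›
  rw [← Set.ncard_le_one_iff_subsingleton, Set.ncard_sdiff_singleton_of_mem (zero_mem _)]
  exact Nat.sub_le_sub_right (hG.card_nsmulRange_le_two k) 1

theorem HasPseudoSiggers.addOrderOf_nsmul_le_two {G : Type*} [AddCommGroup G]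
    (hG : HasPseudoSiggers G) {k : ℕ} [Finite (nsmulRange G k)] (a : G) :
    addOrderOf (k • a) ≤ 2 :=
  (Nat.le_of_dvd Nat.card_pos ((nsmulRange G k).addOrderOf_dvd_natCard ⟨a, rfl⟩)).trans
    (hG.card_nsmulRange_le_two k)

theorem exists_injective_linearMap_finsupp_nat (K V : Type*) [DivisionRing K] [AddCommGroup V]
    [Module K V] [Countable V] : ∃ f : V →ₗ[K] (ℕ →₀ K), Injective f := by
  obtain ⟨e, he⟩ := exists_injective_nat (Module.Basis.ofVectorSpaceIndex K V)
  exact ⟨Finsupp.lmapDomain K K e ∘ₗ (Module.Basis.ofVectorSpace K V).repr,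
    (Finsupp.mapDomain_injective he).comp (LinearEquiv.injective _)⟩

theorem exists_injective_finsupp_nat_linearMap (K V : Type*) [DivisionRing K] [Finite K]
    [AddCommGroup V] [Module K V] [Infinite V] : ∃ f : (ℕ →₀ K) →ₗ[K] V, Injective f := by
  let b := Module.Basis.ofVectorSpace K V
  have : Infinite (Module.Basis.ofVectorSpaceIndex K V) := by
    by_contra hfin
    have := not_infinite_iff_finite.1 hfin
    have := Module.Finite.of_basis b
    exact not_finite_iff_infinite.2 ‹_› (Module.finite_of_finite K)
  exact ⟨Finsupp.linearCombination K (b ∘ Infinite.natEmbedding _),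
    b.linearIndependent.comp _ (Infinite.natEmbedding _).injective⟩

theorem injective_of_forall_prime_nsmul {A B : Type*} [AddCommGroup A] [AddCommGroup B] {n : ℕ}
    (hA : ∀ a : A, n • a = 0) (f : A →+ B) (hn : n ≠ 0)
    (h : ∀ p : ℕ, p.Prime → p ∣ n → ∀ a : A, p • a = 0 → f a = 0 → a = 0) : Injective f := by
  rw [injective_iff_map_eq_zero]
  intro a hfa
  suffices h0 : ∀ m, m ∣ n → m • a = 0 → a = 0 from h0 n dvd_rfl (hA a)
  intro m
  induction m using induction_on_primes with
  | zero => exact fun h0 => absurd (zero_dvd_iff.1 h0) hn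
  | one => exact fun _ => by rw [one_smul]; exact id
  | prime_mul p m hp ih =>
    intro hpm hma
    exact ih (dvd_of_mul_left_dvd hpm)
      (h p hp (dvd_of_mul_right_dvd hpm) _ (by rwa [← mul_nsmul']) (by simp [hfa]))

/-- The `p`-torsion of `A` only sees the `p`-th summand of `∑ p, (n / p ^ vₚ(n)) • g p`. -/
theorem exists_injective_of_forall_prime {A B : Type*} [AddCommGroup A] [AddCommGroup B] {n : ℕ}
    (hA : ∀ a : A, n • a = 0) (hn : n ≠ 0)
    (h : ∀ p : ℕ, p.Prime → p ∣ n → ∃ g : A →+ B, ∀ a, p • a = 0 → g a = 0 → a = 0) :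
    ∃ f : A →+ B, Injective f := by
  choose! g hg using h
  refine ⟨∑ q ∈ n.primeFactors, ordCompl[q] n • g q,
    injective_of_forall_prime_nsmul hA _ hn fun p hp hpn a hpa hfa => hg p hp hpn a hpa ?_⟩
  have hcop : Nat.Coprime (ordCompl[p] n) p := (Nat.coprime_ordCompl hp hn).symm
  have hsum : (∑ q ∈ n.primeFactors, ordCompl[q] n • g q) a = ordCompl[p] n • g p a := by
    rw [AddMonoidHom.finsetSum_apply]
    refine Finset.sum_eq_single_of_mem p (Nat.mem_primeFactors.2 ⟨hp, hpn, hn⟩) fun q hq hqp => ?_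
    have hq := Nat.prime_of_mem_primeFactors hq
    obtain ⟨c, hc⟩ : p ∣ ordCompl[q] n := Nat.dvd_ordCompl_of_dvd_not_dvd hpn
      fun hqp' => hqp ((Nat.prime_dvd_prime_iff_eq hq hp).1 hqp')
    rw [AddMonoidHom.nsmul_apply, ← map_nsmul, hc, mul_comm, mul_nsmul', hpa, nsmul_zero, map_zero]
  rw [hsum] at hfa
  have hp0 : p • g p a = 0 := by rw [← map_nsmul, hpa, map_zero]
  rw [← addOrderOf_dvd_iff_nsmul_eq_zero] at hp0 hfa
  exact AddMonoid.addOrderOf_eq_one_iff.1 (Nat.eq_one_of_dvd_coprimes hcop hfa hp0)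

theorem exists_zmod_addMonoidHom_map_one {A : Type*} [AddCommGroup A] {n : ℕ} {a : A}
    (ha : n • a = 0) : ∃ i : ZMod n →+ A, i 1 = a :=
  ⟨ZMod.lift n ⟨zmultiplesHom A a, by simpa using ha⟩, by
    simpa using ZMod.lift_coe n ⟨zmultiplesHom A a, by simpa using ha⟩ 1⟩

theorem zmod_addMonoidHom_injective {A : Type*} [AddCommGroup A] {n : ℕ} {i : ZMod n →+ A}
    (hi : addOrderOf (i 1) = n) : Injective i := by
  rw [injective_iff_map_eq_zero]
  intro x hx
  obtain ⟨z, rfl⟩ := ZMod.intCast_surjective x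
  rw [← zsmul_one, map_zsmul, ← addOrderOf_dvd_iff_zsmul_eq_zero, hi] at hx
  exact (ZMod.intCast_zmod_eq_zero_iff_dvd z n).2 hx

theorem finsupp_zmod_addMonoidHom_ext {ι A : Type*} [AddCommGroup A] {n : ℕ}
    {f g : (ι →₀ ZMod n) →+ A}
    (h : ∀ i, f (Finsupp.single i 1) = g (Finsupp.single i 1)) : f = g := by
  refine Finsupp.addHom_ext fun i x => ?_
  obtain ⟨z, rfl⟩ := ZMod.intCast_surjective x
  rw [← zsmul_one, ← Finsupp.smul_single, map_zsmul, map_zsmul, h]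

theorem exists_finsupp_zmod_addMonoidHom {ι A : Type*} [AddCommGroup A] {n : ℕ} {y : ι → A}
    (hy : ∀ i, n • y i = 0) :
    ∃ g : (ι →₀ ZMod n) →+ A, ∀ i, g (Finsupp.single i 1) = y i := by
  choose c hc using fun i => exists_zmod_addMonoidHom_map_one (hy i)
  exact ⟨Finsupp.liftAddHom c, by simp [hc]⟩

theorem exists_injective_zmod_of_dvd {d n : ℕ} [NeZero n] (hd : d ∣ n) :
    ∃ i : ZMod d →+ ZMod n, Injective i := by
  obtain ⟨m, rfl⟩ := hd
  have hm : m ≠ 0 := right_ne_zero_of_mul (NeZero.ne (d * m))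
  have hord : addOrderOf (m : ZMod (d * m)) = d := by
    rw [ZMod.addOrderOf_coe _ (NeZero.ne _), Nat.gcd_mul_left_left,
      Nat.mul_div_cancel _ (Nat.pos_of_ne_zero hm)]
  obtain ⟨i, hi⟩ := exists_zmod_addMonoidHom_map_one (n := d) (a := (m : ZMod (d * m)))
    (addOrderOf_dvd_iff_nsmul_eq_zero.1 hord.dvd)
  exact ⟨i, zmod_addMonoidHom_injective (hi ▸ hord)⟩

theorem nsmul_eq_zero_of_castHom_eq_zero {p m : ℕ} {x : ZMod (p * m)}
    (hx : ZMod.castHom (dvd_mul_right p m) (ZMod p) x = 0) : m • x = 0 := by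
  obtain ⟨z, rfl⟩ := ZMod.intCast_surjective x
  obtain ⟨k, rfl⟩ := (ZMod.intCast_zmod_eq_zero_iff_dvd z p).1 (by simpa using hx)
  have h0 : (p * m : ZMod (p * m)) = 0 := by exact_mod_cast ZMod.natCast_self (p * m)
  rw [nsmul_eq_mul]
  push_cast
  linear_combination (k : ZMod (p * m)) * h0

/-- Embed the `p`-torsion, a countable vector space, into `⨁ ZMod p ↪ ⨁ ZMod n`, and extend to `G`
by injectivity of `⨁ ZMod n`. -/
theorem exists_injective_finsupp_zmod {G : Type*} [AddCommGroup G] [Countable G] {n : ℕ}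
    [NeZero n] (hG : ∀ a : G, n • a = 0) : ∃ f : G →+ (ℕ →₀ ZMod n), Injective f := by
  refine exists_injective_of_forall_prime hG (NeZero.ne n) fun p hp hpn => ?_
  have := Fact.mk hp
  let V := (nsmulAddMonoidHom p : G →+ G).ker
  let := AddCommGroup.zmodModule (n := p) (G := V) fun v => Subtype.ext v.2
  obtain ⟨f, hf⟩ := exists_injective_linearMap_finsupp_nat (ZMod p) V
  obtain ⟨i, hi⟩ := exists_injective_zmod_of_dvd hpn
  let φ : V →+ (ℕ →₀ ZMod n) := (Finsupp.mapRange.addMonoidHom i).comp f.toAddMonoidHom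
  have hφ : Injective φ := (Finsupp.mapRange_injective i i.map_zero hi).comp hf
  obtain ⟨ψ, hψ⟩ := ((isInjectiveMod_zmod n).finsupp ℕ).exists_extension V.subtype φ
    fun v a hva => by
      have hv : v = 0 := Subtype.ext (hva.trans (hG a))
      rw [hv, map_zero]
  refine ⟨ψ, fun a hpa ha => ?_⟩
  have hφa : φ ⟨a, hpa⟩ = φ 0 := by
    rw [← hψ, map_zero]
    exact ha
  exact congrArg Subtype.val (hφ hφa)

theorem infinite_ker_nsmul_comp_nsmulRange_subtype {G : Type*} [AddCommGroup G] (p m : ℕ)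
    [Finite (nsmulRange G (p * m))] [hinf : Infinite (nsmulRange G m)] :
    Infinite ((nsmulAddMonoidHom p).comp (nsmulRange G m).subtype).ker := by
  by_contra hker
  have hrange : ((nsmulAddMonoidHom p).comp (nsmulRange G m).subtype).range ≤
      nsmulRange G (p * m) := by
    rintro _ ⟨⟨_, a, rfl⟩, rfl⟩
    exact ⟨a, mul_nsmul' a p m⟩
  refine hinf.not_finite ((AddMonoidHom.finite_iff_finite_ker_range _).2
    ⟨not_infinite_iff_finite.1 hker, ?_⟩)
  exact Finite.Set.subset (nsmulRange G (p * m)) hrange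

/-- The `p`-torsion of `mG` is infinite, so it contains a copy of `⨁ ZMod p`. Dividing the images of
the basis vectors by `m` defines `g`. -/
theorem exists_finsupp_zmod_addMonoidHom_of_infinite_nsmulRange {G : Type*} [AddCommGroup G]
    {p m : ℕ} (hp : p.Prime) [NeZero m] [Finite (nsmulRange G (p * m))]
    [Infinite (nsmulRange G m)] :
    ∃ g : (ℕ →₀ ZMod (p * m)) →+ G, ∀ x, p • x = 0 → g x = 0 → x = 0 := by
  have := Fact.mk hp
  let μ : nsmulRange G m →+ G := (nsmulAddMonoidHom p).comp (nsmulRange G m).subtype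
  have : Infinite μ.ker := infinite_ker_nsmul_comp_nsmulRange_subtype p m
  let := AddCommGroup.zmodModule (n := p) (G := μ.ker) fun v => Subtype.ext (Subtype.ext v.2)
  obtain ⟨f, hf⟩ := exists_injective_finsupp_nat_linearMap (ZMod p) μ.ker
  let F : (ℕ →₀ ZMod p) →+ G :=
    ((nsmulRange G m).subtype.comp μ.ker.subtype).comp f.toAddMonoidHom
  have hF : Injective F := Subtype.val_injective.comp (Subtype.val_injective.comp hf)
  choose y hy using fun k : ℕ => (f (Finsupp.single k 1)).1.2
  replace hy (k) : m • y k = F (Finsupp.single k 1) := hy k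
  obtain ⟨g, hg⟩ := exists_finsupp_zmod_addMonoidHom (n := p * m) (y := y) fun k => by
    rw [mul_nsmul', hy]
    exact (f (Finsupp.single k 1)).2
  let red : (ℕ →₀ ZMod (p * m)) →+ (ℕ →₀ ZMod p) := Finsupp.mapRange.addMonoidHom
    (ZMod.castHom (dvd_mul_right p m) (ZMod p)).toAddMonoidHom
  have hmg : m • g = F.comp red := finsupp_zmod_addMonoidHom_ext fun k => by simp [hg, hy, red]
  have : NeZero (p * m) := ⟨mul_ne_zero hp.ne_zero (NeZero.ne m)⟩
  refine ⟨g, fun x hpx hgx => ?_⟩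
  obtain ⟨b, rfl⟩ := ((isInjectiveMod_zmod (p * m)).finsupp ℕ).exists_nsmul_eq (mul_comm m p) hpx
  have hred : red b = 0 := hF <| by
    rw [map_zero, ← hgx, map_nsmul]
    exact (DFunLike.congr_fun hmg b).symm
  ext k
  exact nsmul_eq_zero_of_castHom_eq_zero (DFunLike.congr_fun hred k)

theorem exists_injective_finsupp_zmod_of_infinite_nsmulRange {G : Type*} [AddCommGroup G]
    {n : ℕ} [NeZero n] [Finite (nsmulRange G n)]
    (h : ∀ p m : ℕ, p.Prime → p * m = n → Infinite (nsmulRange G m)) :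
    ∃ g : (ℕ →₀ ZMod n) →+ G, Injective g := by
  refine exists_injective_of_forall_prime ((isInjectiveMod_zmod n).finsupp ℕ).nsmul_eq_zero
    (NeZero.ne n) ?_
  rintro p hp ⟨m, rfl⟩
  have := h p m hp rfl
  have : NeZero m := ⟨right_ne_zero_of_mul (NeZero.ne (p * m))⟩
  exact exists_finsupp_zmod_addMonoidHom_of_infinite_nsmulRange hp

theorem addOrderOf_nsmul_of_eq_mul {G : Type*} [AddMonoid G] {a : G} {k d : ℕ} (hk : k ≠ 0)
    (ha : addOrderOf a = d * k) : addOrderOf (k • a) = d := by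
  rw [addOrderOf_nsmul_of_dvd hk (ha ▸ dvd_mul_left k d), ha,
    Nat.mul_div_cancel _ (Nat.pos_of_ne_zero hk)]

theorem exists_injective_finsupp_prod_zmod {G : Type*} [AddCommGroup G] [Countable G] {n : ℕ}
    [NeZero n] (hG : ∀ x : G, (2 * n) • x = 0) {a : G} (ha : addOrderOf a = 2 * n)
    (hnG : ((nsmulRange G n : Set G) \ {0}).Subsingleton) :
    ∃ f : G →+ (ℕ →₀ ZMod n) × ZMod (2 * n), Injective f := by
  obtain ⟨i, hi⟩ := exists_zmod_addMonoidHom_map_one (n := 2 * n) (hG a)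
  have hi_inj : Injective i := zmod_addMonoidHom_injective (hi ▸ ha)
  obtain ⟨c, hc⟩ := (isInjectiveMod_zmod (2 * n)).exists_extension i (AddMonoidHom.id _)
    fun b x hbx => (map_eq_zero_iff i hi_inj).1 (hbx.trans (hG x))
  have : Countable (G ⧸ nsmulRange G n) := QuotientAddGroup.mk_surjective.countable
  obtain ⟨h, hh⟩ := exists_injective_finsupp_zmod
    (nsmul_quotient_nsmulRange_eq_zero (A := G) n)
  refine ⟨(h.comp (QuotientAddGroup.mk' _)).prod c, (injective_iff_map_eq_zero _).2 fun x hx => ?_⟩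
  obtain ⟨hx₁, hx₂⟩ := Prod.mk.inj hx
  have hxn : x ∈ nsmulRange G n :=
    (QuotientAddGroup.eq_zero_iff x).1 ((map_eq_zero_iff h hh).1 hx₁)
  by_contra hx0
  have hna : n • a ≠ 0 := fun h0 => by
    simpa [h0] using addOrderOf_nsmul_of_eq_mul (NeZero.ne n) ha
  apply hna
  have hxa : x = i (n • 1) := by
    rw [map_nsmul, hi]
    exact hnG ⟨hxn, hx0⟩ ⟨⟨a, rfl⟩, hna⟩
  have h0 : n • (1 : ZMod (2 * n)) = 0 := (hc _).symm.trans (hxa ▸ hx₂)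
  rw [← hi, ← map_nsmul, h0, map_zero]

/-- The image of `C` meets `f (⨁ A)` in finitely many elements, whose supports are bounded; shifting
`⨁ A` beyond that bound makes the images independent. -/
theorem exists_injective_finsupp_prod {A C G : Type*} [AddCommGroup A] [AddCommGroup C] [Finite C]
    [AddCommGroup G] {f : (ℕ →₀ A) →+ G} (hf : Injective f) {i : C →+ G} (hi : Injective i) :
    ∃ g : (ℕ →₀ A) × C →+ G, Injective g := by
  classical
  have hfin : (f ⁻¹' Set.range i).Finite := (Set.finite_range i).preimage hf.injOn
  obtain ⟨N, hN⟩ := (hfin.toFinset.biUnion Finsupp.support).bddAbove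
  have hshift_inj : Injective fun k : ℕ => N + 1 + k := add_right_injective _
  let shift : (ℕ →₀ A) →+ (ℕ →₀ A) := Finsupp.mapDomain.addMonoidHom fun k => N + 1 + k
  refine ⟨(f.comp shift).coprod i, (injective_iff_map_eq_zero _).2 fun ⟨k, c⟩ hkc => ?_⟩
  have hkc' : f (shift k) = i (-c) := by
    rw [map_neg]
    exact eq_neg_of_add_eq_zero_left hkc
  have hk : k = 0 := by
    ext j
    by_contra hj
    have hmem : N + 1 + j ∈ hfin.toFinset.biUnion Finsupp.support :=
      Finset.mem_biUnion.2 ⟨shift k, hfin.mem_toFinset.2 ⟨-c, hkc'.symm⟩, by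
        rw [Finsupp.mem_support_iff]
        exact (Finsupp.mapDomain_apply hshift_inj k j).trans_ne hj⟩
    have := hN hmem
    omega
  subst hk
  rw [map_zero, map_zero, eq_comm, map_eq_zero_iff i hi, neg_eq_zero] at hkc'
  rw [hkc', Prod.mk_zero_zero]

theorem nsmulRange_eq_bot {G : Type*} [AddCommGroup G] {n : ℕ} (hG : ∀ a : G, n • a = 0) :
    nsmulRange G n = ⊥ := by
  rw [AddMonoidHom.range_eq_bot_iff]
  ext a
  exact hG a

section Biembeddability

variable {G : Type*} [AddCommGroup G] [Countable G]

theorem addBiembeddable_finsupp_zmod {n : ℕ} [NeZero n] (hG : ∀ a : G, n • a = 0)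
    (h : ∀ p m : ℕ, p.Prime → p * m = n → Infinite (nsmulRange G m)) :
    AddBiembeddable G (ℕ →₀ ZMod n) := by
  have : Finite (nsmulRange G n) := by
    rw [nsmulRange_eq_bot hG]
    infer_instance
  obtain ⟨f, hf⟩ := exists_injective_finsupp_zmod hG
  obtain ⟨g, hg⟩ := exists_injective_finsupp_zmod_of_infinite_nsmulRange h
  exact ⟨f, g, hf, hg⟩

theorem HasPseudoSiggers.addBiembeddable_finsupp_prod_zmod (hG : HasPseudoSiggers G) {n : ℕ}
    [NeZero n] (h2n : ∀ x : G, (2 * n) • x = 0) {a : G} (ha : addOrderOf a = 2 * n)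
    [Finite (nsmulRange G n)] : AddBiembeddable G ((ℕ →₀ ZMod n) × ZMod (2 * n)) := by
  obtain ⟨i, hi⟩ := exists_zmod_addMonoidHom_map_one (n := 2 * n) (h2n a)
  obtain ⟨f, hf⟩ :=
    exists_injective_finsupp_prod_zmod h2n ha (hG.nsmulRange_diff_zero_subsingleton n)
  obtain ⟨g, hg⟩ : ∃ g : (ℕ →₀ ZMod n) →+ G, Injective g := by
    refine exists_injective_finsupp_zmod_of_infinite_nsmulRange fun q l hq hql => ?_
    by_contra hfin
    have := not_infinite_iff_finite.1 hfin
    have hl : l ≠ 0 := right_ne_zero_of_mul (hql ▸ NeZero.ne n)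
    have hord : addOrderOf (l • a) = 2 * q :=
      addOrderOf_nsmul_of_eq_mul hl (by rw [ha, ← hql, mul_assoc])
    have hle := hord ▸ hG.addOrderOf_nsmul_le_two (k := l) a
    have hq2 := hq.two_le
    omega
  obtain ⟨g', hg'⟩ := exists_injective_finsupp_prod hg (zmod_addMonoidHom_injective (hi ▸ ha))
  exact ⟨f, g', hf, hg'⟩

theorem HasPseudoSiggers.exists_addBiembeddable (hG : HasPseudoSiggers G)
    (hexp : AddMonoid.ExponentExists G) :
    ∃ n : ℕ, n ≠ 0 ∧ (AddBiembeddable G (ℕ →₀ ZMod n) ∨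
      AddBiembeddable G ((ℕ →₀ ZMod n) × ZMod (2 * n))) := by
  obtain ⟨a, ha⟩ := AddMonoid.exists_addOrderOf_eq_exponent hexp
  have hE := AddMonoid.exponent_nsmul_eq_zero (G := G)
  have hE0 := AddMonoid.exponent_ne_zero.2 hexp
  by_cases h : ∀ p m : ℕ, p.Prime → p * m = AddMonoid.exponent G → Infinite (nsmulRange G m)
  · have := NeZero.mk hE0
    exact ⟨_, hE0, .inl (addBiembeddable_finsupp_zmod hE h)⟩
  push Not at h
  obtain ⟨p, m, hp, hpm, hfin⟩ := h
  rw [← hpm] at ha hE hE0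
  have hm : m ≠ 0 := right_ne_zero_of_mul hE0
  obtain rfl : p = 2 := le_antisymm
    (addOrderOf_nsmul_of_eq_mul hm ha ▸ hG.addOrderOf_nsmul_le_two a) hp.two_le
  have := NeZero.mk hm
  exact ⟨m, hm, .inr (hG.addBiembeddable_finsupp_prod_zmod hE ha)⟩

end Biembeddability

end Necessity

/-- For a countable abelian group `G` of finite exponent, `(G, ≠)` has a
pseudo-Siggers polymorphism iff `G` is bi-embeddable with `⨁_ℕ ZMod n` or with
`(⨁_ℕ ZMod n) × ZMod (2*n)` for some `n ≥ 1`. -/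
theorem stmt_0 (G : Type) [AddCommGroup G] [Countable G]
    (hexp : ∃ k : ℕ, 1 ≤ k ∧ ∀ x : G, k • x = 0) :
    (∃ (s : (Fin 6 → G) →+ G) (e₁ e₂ : G →+ G),
        (∀ p q : Fin 6 → G, (∀ i, p i ≠ q i) → s p ≠ s q) ∧
        Function.Injective e₁ ∧ Function.Injective e₂ ∧
        (∀ x y z : G, e₁ (s ![x, y, x, z, y, z]) = e₂ (s ![y, x, z, x, z, y])))
    ↔
    (∃ n : ℕ, 1 ≤ n ∧
      ((∃ (f : G →+ DirectSum ℕ (fun _ => ZMod n))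
          (g : DirectSum ℕ (fun _ => ZMod n) →+ G),
          Function.Injective f ∧ Function.Injective g) ∨
       (∃ (f : G →+ (DirectSum ℕ (fun _ => ZMod n)) × ZMod (2 * n))
          (g : (DirectSum ℕ (fun _ => ZMod n)) × ZMod (2 * n) →+ G),
          Function.Injective f ∧ Function.Injective g))) := by
  have he (n : ℕ) : AddBiembeddable G (ℕ →₀ ZMod n) ↔
      AddBiembeddable G (DirectSum ℕ fun _ => ZMod n) :=
    AddBiembeddable.congr_right (finsuppLEquivDirectSum ℤ (ZMod n) ℕ).toAddEquiv
  have he' (n : ℕ) : AddBiembeddable G ((ℕ →₀ ZMod n) × ZMod (2 * n)) ↔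
      AddBiembeddable G ((DirectSum ℕ fun _ => ZMod n) × ZMod (2 * n)) :=
    AddBiembeddable.congr_right
      ((finsuppLEquivDirectSum ℤ (ZMod n) ℕ).toAddEquiv.prodCongr (.refl _))
  constructor
  · intro hG
    obtain ⟨n, hn, h⟩ := HasPseudoSiggers.exists_addBiembeddable hG hexp
    exact ⟨n, Nat.one_le_iff_ne_zero.2 hn, h.imp (he n).1 (he' n).1⟩
  · rintro ⟨n, hn, h⟩
    have : NeZero n := ⟨Nat.one_le_iff_ne_zero.1 hn⟩
    obtain h | h := h
    · exact HasPseudoSiggers.of_addBiembeddable_finsupp_zmod ((he n).2 h)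
    · exact HasPseudoSiggers.of_addBiembeddable_finsupp_prod_zmod ((he' n).2 h)
end

section
/- Let G be a countable abelian group of finite exponent with G nontrivial, in which every element has order a power of 2. Then the following are equivalent: (A) there exists x ∈ G with x ≠ 0 and x + x = 0 such that G is bi-embeddable with G × (G ⧸ AddSubgroup.zmultiples x); (B) there is an injective additive group homomorphism G × G →+ G, or there exists n ∈ ℕ such that G is bi-embeddable with (⨁_ℕ ZMod (2^n)) × ZMod (2^(n+1)). -/
/-!
Let `p` be prime and let `G` be a countable abelian group killed by a power of `p`. The subgroup
`G[p] ∩ p ^ n G` decides which sums of cyclic groups sit inside `G`: if it is infinite, then lifting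
infinitely many independent elements of it along `p ^ n` embeds `⨁_ℕ ZMod (p ^ (n + 1))` into `G`.
Conversely, `⨁_ℕ ZMod (p ^ n)` is an injective object among the groups killed by `p ^ n`, and so
contains every countable one of them.

Let `n` be the least number for which `G[p] ∩ p ^ n G` is finite. Then `⨁_ℕ ZMod (p ^ n)` embeds in
`G`, and whenever `G × Q` embeds in `G`, counting `G[p] ∩ p ^ n G` forces `p ^ n Q = 0`. For
`Q = G ⧸ ⟨x⟩` with `x` of order `p` this says `p ^ n G ≤ ⟨x⟩`: either `p ^ n G = 0`, and `G × G`
embeds in `⨁_ℕ ZMod (p ^ n)`, or `p ^ n G = ⟨x⟩` is cyclic of order `p`, and `G` is bi-embeddable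
with `(⨁_ℕ ZMod (p ^ n)) × ZMod (p ^ (n + 1))`.
-/

open Function AddSubgroup

/-- `A` embeds in `B` as an additive group. -/
def AddEmbeds (A B : Type*) [AddCommGroup A] [AddCommGroup B] : Prop :=
  ∃ f : A →+ B, Injective f

/-- `A` and `B` are bi-embeddable additive groups: each embeds in the other. -/
def AddBiEmbeddable (A B : Type*) [AddCommGroup A] [AddCommGroup B] : Prop :=
  AddEmbeds A B ∧ AddEmbeds B A

namespace AddEmbeds

variable {A B C D : Type*} [AddCommGroup A] [AddCommGroup B] [AddCommGroup C] [AddCommGroup D]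

theorem of_subsingleton [Subsingleton A] : AddEmbeds A B :=
  ⟨0, injective_of_subsingleton _⟩

theorem of_addEquiv (e : A ≃+ B) : AddEmbeds A B :=
  ⟨e, e.injective⟩

theorem inl : AddEmbeds A (A × B) :=
  ⟨AddMonoidHom.inl A B, Prod.mk_left_injective 0⟩

theorem trans : AddEmbeds A B → AddEmbeds B C → AddEmbeds A C
  | ⟨f, hf⟩, ⟨g, hg⟩ => ⟨g.comp f, hg.comp hf⟩

theorem prodMap : AddEmbeds A C → AddEmbeds B D → AddEmbeds (A × B) (C × D)
  | ⟨f, hf⟩, ⟨g, hg⟩ => ⟨f.prodMap g, hf.prodMap hg⟩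

theorem finsupp_directSum (ι M : Type*) [AddCommGroup M] :
    AddEmbeds (ι →₀ M) (DirectSum ι fun _ => M) := by
  classical exact of_addEquiv (finsuppLEquivDirectSum ℤ M ι).toAddEquiv

theorem directSum_finsupp (ι M : Type*) [AddCommGroup M] :
    AddEmbeds (DirectSum ι fun _ => M) (ι →₀ M) := by
  classical exact of_addEquiv (finsuppLEquivDirectSum ℤ M ι).symm.toAddEquiv

/-- Shifting the coordinates far enough moves the sum off a finite subset of `G`. -/
theorem exists_hom_finsupp_mem_range_imp_eq_zero {M G H : Type*} [AddCommGroup M] [AddCommGroup G]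
    [AddCommGroup H] [Finite H] (h : AddEmbeds (ℕ →₀ M) G) (ζ : H →+ G) :
    ∃ φ : (ℕ →₀ M) →+ G, ∀ a, φ a ∈ ζ.range → a = 0 := by
  obtain ⟨φ, hφ⟩ := h
  have hfin : (φ ⁻¹' Set.range ζ).Finite := (Set.finite_range ζ).preimage hφ.injOn
  obtain ⟨N, hN⟩ := (hfin.biUnion fun a _ => a.support.finite_toSet).bddAbove
  have hshift : Injective (· + (N + 1)) := add_left_injective (N + 1)
  refine ⟨φ.comp (Finsupp.mapDomain.addMonoidHom (· + (N + 1))),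
    fun a ha => Finsupp.ext fun i => ?_⟩
  by_contra hi
  have hsupp : i + (N + 1) ∈ (Finsupp.mapDomain (· + (N + 1)) a).support := by
    rwa [Finsupp.mem_support_iff, Finsupp.mapDomain_apply hshift]
  have hle : i + (N + 1) ≤ N := hN (Set.mem_biUnion ha hsupp)
  omega

theorem finsupp_prod_of_finite {M G H : Type*} [AddCommGroup M] [AddCommGroup G] [AddCommGroup H]
    [Finite H] (hM : AddEmbeds (ℕ →₀ M) G) (hH : AddEmbeds H G) :
    AddEmbeds ((ℕ →₀ M) × H) G := by
  obtain ⟨ζ, hζ⟩ := hH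
  obtain ⟨φ, hdisj⟩ := hM.exists_hom_finsupp_mem_range_imp_eq_zero ζ
  refine ⟨φ.coprod ζ, (injective_iff_map_eq_zero _).2 fun ⟨a, h⟩ h0 => ?_⟩
  rw [AddMonoidHom.coprod_apply] at h0
  obtain rfl : a = 0 := hdisj a ⟨-h, by rw [map_neg, eq_neg_of_add_eq_zero_left h0]⟩
  rw [map_zero, zero_add] at h0
  exact Prod.ext rfl ((map_eq_zero_iff ζ hζ).1 h0)

end AddEmbeds

section PrimaryTorsion

variable {A B : Type*} [AddCommGroup A] [AddCommGroup B] {p m : ℕ}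

theorem exists_pow_nsmul_ne_zero {y : A} (hy : y ≠ 0) (hm : p ^ m • y = 0) :
    ∃ k : ℕ, p ^ k • y ≠ 0 ∧ p • p ^ k • y = 0 := by
  induction m with
  | zero => exact absurd (by simpa using hm) hy
  | succ m ih =>
    by_cases h : p ^ m • y = 0
    · exact ih h
    · exact ⟨m, h, by rwa [smul_smul, ← pow_succ']⟩

theorem injective_of_forall_nsmul_eq_zero (hA : ∀ y : A, p ^ m • y = 0) (f : A →+ B)
    (hf : ∀ y, p • y = 0 → f y = 0 → y = 0) : Injective f := by
  refine (injective_iff_map_eq_zero f).2 fun y hy => by_contra fun hne => ?_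
  obtain ⟨k, hk, hpk⟩ := exists_pow_nsmul_ne_zero hne (hA y)
  exact hk (hf _ hpk (by rw [map_nsmul, hy, smul_zero]))

theorem exists_pow_nsmul_eq_zero (hp : 1 < p) (hexp : ∃ k : ℕ, 1 ≤ k ∧ ∀ x : A, k • x = 0)
    (hord : ∀ x : A, ∃ k : ℕ, addOrderOf x = p ^ k) : ∃ m : ℕ, ∀ x : A, p ^ m • x = 0 := by
  obtain ⟨k, hk, hA⟩ := hexp
  refine ⟨k, fun x => addOrderOf_dvd_iff_nsmul_eq_zero.1 ?_⟩
  obtain ⟨j, hj⟩ := hord x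
  have hle : p ^ j ≤ k := Nat.le_of_dvd hk (hj ▸ addOrderOf_dvd_iff_nsmul_eq_zero.2 (hA x))
  rw [hj]
  exact pow_dvd_pow p ((Nat.lt_pow_self hp).le.trans hle)

theorem pow_succ_nsmul_eq_zero_of_mem_zmultiples {x y : A} (hpx : p • x = 0)
    (hy : p ^ m • y ∈ zmultiples x) : p ^ (m + 1) • y = 0 := by
  obtain ⟨c, hc⟩ := hy
  rw [pow_succ', mul_smul, ← hc, smul_comm, hpx, smul_zero]

theorem nsmul_quotient_eq_zero {N : ℕ} (hA : ∀ y : A, N • y = 0) (V : AddSubgroup A)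
    (q : A ⧸ V) : N • q = 0 := by
  obtain ⟨y, rfl⟩ := QuotientAddGroup.mk_surjective q
  rw [← QuotientAddGroup.mk_nsmul, hA, QuotientAddGroup.mk_zero]

theorem disjoint_zmultiples_ker [Fact p.Prime] {x : A} (hpx : p • x = 0) (f : A →+ B)
    (hfx : f x ≠ 0) : Disjoint (zmultiples x) f.ker := by
  rw [AddSubgroup.disjoint_def]
  rintro _ ⟨c, rfl⟩ (hc : f (c • x) = 0)
  have hord : addOrderOf (f x) = p :=
    addOrderOf_eq_prime (by rw [← map_nsmul, hpx, map_zero]) hfx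
  rw [map_zsmul, ← addOrderOf_dvd_iff_zsmul_eq_zero, hord] at hc
  exact addOrderOf_dvd_iff_zsmul_eq_zero.1
    ((Int.natCast_dvd_natCast.2 (addOrderOf_dvd_of_nsmul_eq_zero hpx)).trans hc)

end PrimaryTorsion

section ZMod

variable {A : Type*} [AddCommGroup A]

/-- The homomorphism from `ZMod N` that sends `1` to a given element killed by `N`. -/
def zmodHom {N : ℕ} (z : A) (hz : N • z = 0) : ZMod N →+ A :=
  ZMod.lift N ⟨zmultiplesHom A z, by rw [zmultiplesHom_apply, natCast_zsmul, hz]⟩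

theorem zmodHom_intCast {N : ℕ} (z : A) (hz : N • z = 0) (a : ℤ) :
    zmodHom z hz (a : ZMod N) = a • z := by
  simp [zmodHom]

theorem zmodHom_injective {N : ℕ} (z : A) (hz : addOrderOf z = N) :
    Injective (zmodHom z (hz ▸ addOrderOf_nsmul_eq_zero z)) := by
  refine (ZMod.lift_injective _).2 fun a ha => ?_
  rw [ZMod.intCast_zmod_eq_zero_iff_dvd, ← hz]
  exact addOrderOf_dvd_iff_zsmul_eq_zero.2 ha

theorem nsmul_finsupp_zmod_eq_zero {ι : Type*} {N : ℕ} (y : ι →₀ ZMod N) : N • y = 0 := by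
  ext i
  rw [Finsupp.smul_apply, nsmul_eq_mul, ZMod.natCast_self, zero_mul, Finsupp.zero_apply]

theorem nsmul_pow_eq_zero (p n : ℕ) : p • (p ^ n : ZMod (p ^ (n + 1))) = 0 := by
  rw [nsmul_eq_mul, ← pow_succ', ← Nat.cast_pow, ZMod.natCast_self]

/-- The inclusion of `ZMod p` as the `p`-torsion subgroup of `ZMod (p ^ (n + 1))`. -/
def zmodSocleHom (p n : ℕ) : ZMod p →+ ZMod (p ^ (n + 1)) :=
  zmodHom (p ^ n : ZMod (p ^ (n + 1))) (nsmul_pow_eq_zero p n)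

theorem zmodSocleHom_one (p n : ℕ) : zmodSocleHom p n 1 = p ^ n := by
  simpa [zmodSocleHom] using zmodHom_intCast _ (nsmul_pow_eq_zero p n) 1

variable {p : ℕ} [NeZero p]

theorem pow_mul_intCast_eq_zero_iff (n : ℕ) (a : ℤ) :
    (p ^ n * a : ZMod (p ^ (n + 1))) = 0 ↔ (p : ℤ) ∣ a := by
  have hpn : (p ^ n : ℤ) ≠ 0 := pow_ne_zero n (Nat.cast_ne_zero.2 (NeZero.ne p))
  rw [← mul_dvd_mul_iff_left hpn, ← pow_succ, ← Nat.cast_pow p (n + 1),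
    ← ZMod.intCast_zmod_eq_zero_iff_dvd]
  push_cast
  rfl

theorem zmodSocleHom_injective (n : ℕ) : Injective (zmodSocleHom p n) := by
  refine (injective_iff_map_eq_zero _).2 fun c hc => ?_
  obtain ⟨a, rfl⟩ := ZMod.intCast_surjective c
  rw [zmodSocleHom, zmodHom_intCast, zsmul_eq_mul, mul_comm, pow_mul_intCast_eq_zero_iff] at hc
  exact (ZMod.intCast_zmod_eq_zero_iff_dvd a p).2 hc

theorem mem_range_zmodSocleHom {n : ℕ} {c : ZMod (p ^ (n + 1))} (hc : p • c = 0) :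
    c ∈ Set.range (zmodSocleHom p n) := by
  obtain ⟨a, rfl⟩ := ZMod.intCast_surjective c
  have hdvd : (p ^ n : ℤ) * p ∣ a * p := by
    rwa [nsmul_eq_mul, ← Int.cast_natCast, ← Int.cast_mul, ZMod.intCast_zmod_eq_zero_iff_dvd,
      pow_succ, Nat.cast_mul, Nat.cast_pow, mul_comm (p : ℤ) a] at hc
  obtain ⟨b, rfl⟩ := Int.dvd_of_mul_dvd_mul_right (Nat.cast_ne_zero.2 (NeZero.ne p)) hdvd
  exact ⟨b, by simp [zmodSocleHom, zmodHom_intCast, mul_comm]⟩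

theorem mem_range_mapRange_zmodSocleHom {ι : Type*} {n : ℕ} {y : ι →₀ ZMod (p ^ (n + 1))}
    (hy : p • y = 0) : ∃ t, Finsupp.mapRange.addMonoidHom (zmodSocleHom p n) t = y := by
  have hrange : y ∈ Set.range (Finsupp.mapRange (zmodSocleHom p n) (map_zero _)) := by
    rw [Finsupp.range_mapRange]
    exact fun i => mem_range_zmodSocleHom (DFunLike.congr_fun hy i)
  exact hrange

end ZMod

section Injectivity

/-- Over a principal ideal ring, Baer's criterion only has to be checked on one generator `r` of
each ideal, where it says that `M` is divisible by `r` as far as the annihilator of `r` permits. -/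
theorem baer_of_forall_annihilator {R M : Type*} [CommRing R] [IsPrincipalIdealRing R]
    [AddCommGroup M] [Module R M]
    (h : ∀ (r : R) (m : M), (∀ s : R, s * r = 0 → s • m = 0) → ∃ m', r • m' = m) :
    Module.Baer R M := by
  intro I g
  obtain ⟨r, hr⟩ := IsPrincipalIdealRing.principal I
  have hrI : r ∈ I := hr ▸ Submodule.mem_span_singleton_self r
  obtain ⟨m, hm⟩ := h r (g ⟨r, hrI⟩) fun s hs => by
    rw [← map_smul, show s • (⟨r, hrI⟩ : I) = 0 from Subtype.ext hs, map_zero]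
  refine ⟨LinearMap.toSpanSingleton R M m, fun a ha => ?_⟩
  obtain ⟨s, rfl⟩ := Submodule.mem_span_singleton.1 (hr ▸ ha)
  rw [LinearMap.toSpanSingleton_apply, smul_assoc, hm, ← map_smul]
  rfl

theorem zmod_dvd_of_forall_mul_eq_zero {N : ℕ} [NeZero N] {r c : ZMod N}
    (h : ∀ s, s * r = 0 → s * c = 0) : r ∣ c := by
  obtain ⟨a, rfl⟩ := ZMod.intCast_surjective r
  obtain ⟨b, rfl⟩ := ZMod.intCast_surjective c
  obtain ⟨d, hd⟩ : ∃ d : ℤ, d = Int.gcd a N := ⟨_, rfl⟩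
  obtain ⟨a', rfl⟩ : d ∣ a := hd ▸ Int.gcd_dvd_left _ _
  obtain ⟨e, hN⟩ : d ∣ N := hd ▸ Int.gcd_dvd_right _ _
  have he : e ≠ 0 := by
    rintro rfl
    exact NeZero.ne N (by simpa using hN)
  have had : ((d * a' : ℤ) : ZMod N) ∣ (d : ZMod N) := by
    refine ⟨Int.gcdA (d * a') N, ?_⟩
    simpa [← hd] using congrArg (Int.cast : ℤ → ZMod N) (Int.gcd_eq_gcd_ab (d * a') N)
  have heb : ((e * b : ℤ) : ZMod N) = 0 := by
    rw [Int.cast_mul]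
    refine h e ?_
    rw [← Int.cast_mul, ZMod.intCast_zmod_eq_zero_iff_dvd, hN]
    exact ⟨a', by ring⟩
  have hdb : d ∣ b := by
    rw [ZMod.intCast_zmod_eq_zero_iff_dvd, hN, mul_comm e b] at heb
    exact Int.dvd_of_mul_dvd_mul_right he heb
  exact had.trans (map_dvd (Int.castRingHom (ZMod N)) hdb)

theorem baer_finsupp_zmod (ι : Type*) (N : ℕ) [NeZero N] :
    Module.Baer (ZMod N) (ι →₀ ZMod N) := by
  have := IsPrincipalIdealRing.of_surjective (Int.castRingHom (ZMod N)) ZMod.intCast_surjective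
  refine baer_of_forall_annihilator fun r m hm => ?_
  have hrange : m ∈ Set.range (Finsupp.mapRange (r * ·) (mul_zero r)) := by
    rw [Finsupp.range_mapRange]
    intro i
    obtain ⟨c, hc⟩ := zmod_dvd_of_forall_mul_eq_zero
      fun s hs => (DFunLike.congr_fun (hm s hs) i : s * m i = 0)
    exact ⟨c, hc.symm⟩
  exact hrange

theorem exists_extension_finsupp_zmod {ι K : Type*} [AddCommGroup K] {N : ℕ} [NeZero N]
    (hK : ∀ y : K, N • y = 0) (V : AddSubgroup K) (g : V →+ (ι →₀ ZMod N)) :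
    ∃ h : K →+ (ι →₀ ZMod N), ∀ v : V, h v = g v := by
  have : Module (ZMod N) K := AddCommGroup.zmodModule hK
  obtain ⟨h, hh⟩ := (baer_finsupp_zmod ι N).extension_property
    (toZModSubmodule N V).subtype (Submodule.subtype_injective _)
    (AddMonoidHom.toZModLinearMap N (M := toZModSubmodule N V) g)
  exact ⟨h.toAddMonoidHom, fun v => DFunLike.congr_fun hh v⟩

end Injectivity

section Elementary

variable {V : Type*} [AddCommGroup V] {p : ℕ} [Fact p.Prime]

theorem addEmbeds_finsupp_zmod_prime [Countable V] (hV : ∀ y : V, p • y = 0) :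
    AddEmbeds V (ℕ →₀ ZMod p) := by
  have : Module (ZMod p) V := AddCommGroup.zmodModule hV
  let b := Module.Basis.ofVectorSpace (ZMod p) V
  obtain ⟨j, hj⟩ := exists_injective_nat (Module.Basis.ofVectorSpaceIndex (ZMod p) V)
  exact ⟨(Finsupp.mapDomain.addMonoidHom j).comp b.repr.toAddMonoidHom,
    (Finsupp.mapDomain_injective hj).comp b.repr.injective⟩

theorem finsupp_zmod_prime_addEmbeds [Infinite V] (hV : ∀ y : V, p • y = 0) :
    AddEmbeds (ℕ →₀ ZMod p) V := by
  have : Module (ZMod p) V := AddCommGroup.zmodModule hV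
  let b := Module.Basis.ofVectorSpace (ZMod p) V
  have : Infinite (Module.Basis.ofVectorSpaceIndex (ZMod p) V) := by
    refine not_finite_iff_infinite.1 fun hfin => ?_
    have := Module.Finite.of_basis b
    have := Module.finite_of_finite (ZMod p) (M := V)
    exact not_finite V
  let j := Infinite.natEmbedding (Module.Basis.ofVectorSpaceIndex (ZMod p) V)
  exact ⟨b.repr.symm.toAddMonoidHom.comp (Finsupp.mapDomain.addMonoidHom j),
    b.repr.symm.injective.comp (Finsupp.mapDomain_injective j.injective)⟩

end Elementary

/-- The subgroup `G[p] ∩ p ^ n G` of the `p`-torsion elements of height at least `n`. When `G` is a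
direct sum of cyclic `p`-groups, its dimension over `ZMod p` is the number of summands of order
greater than `p ^ n`. -/
def heightSocle (p n : ℕ) (G : Type*) [AddCommGroup G] : AddSubgroup G :=
  (nsmulAddMonoidHom p).ker ⊓ (nsmulAddMonoidHom (p ^ n)).range

theorem AddEmbeds.exists_pow_nsmul_mem_zmultiples {K : Type*} [AddCommGroup K] {p n : ℕ}
    (h : AddEmbeds K (DirectSum ℕ (fun _ => ZMod (p ^ n)) × ZMod (p ^ (n + 1)))) :
    ∃ x : K, p • x = 0 ∧ ∀ y : K, p ^ n • y ∈ zmultiples x := by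
  obtain ⟨f, hf⟩ := h
  have hfst (y : K) : (f (p ^ n • y)).1 = 0 := by
    ext i
    simp [DirectSum]
  have hcyclic : IsAddCyclic (nsmulAddMonoidHom (α := K) (p ^ n)).range := by
    refine isAddCyclic_of_injective (((AddMonoidHom.snd _ _).comp f).comp (AddSubgroup.subtype _))
      ((injective_iff_map_eq_zero _).2 ?_)
    rintro ⟨_, y, rfl⟩ hy
    exact Subtype.ext ((map_eq_zero_iff f hf).1 (Prod.ext (hfst y) hy))
  obtain ⟨⟨_, y, rfl⟩, hgen⟩ := hcyclic.exists_generator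
  refine ⟨p ^ n • y, hf ?_, fun z => ?_⟩
  · rw [map_zero, map_nsmul]
    refine Prod.ext (by rw [Prod.smul_fst, hfst, smul_zero]; rfl) ?_
    rw [Prod.smul_snd, map_nsmul, Prod.smul_snd, smul_smul, ← pow_succ', nsmul_eq_mul,
      ZMod.natCast_self, zero_mul, Prod.snd_zero]
  · obtain ⟨c, hc⟩ := hgen ⟨p ^ n • z, z, rfl⟩
    exact ⟨c, congrArg Subtype.val hc⟩

section BoundedExponent

variable {K : Type*} [AddCommGroup K] [Countable K] {p n : ℕ} [Fact p.Prime]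

/-- The `p`-torsion of `K` embeds in the `p`-torsion of `⨁ ZMod (p ^ n)`, and the embedding extends
to `K` by injectivity. -/
theorem addEmbeds_finsupp_zmod (hK : ∀ y : K, p ^ n • y = 0) :
    AddEmbeds K (ℕ →₀ ZMod (p ^ n)) := by
  obtain _ | n := n
  · have : Subsingleton K := ⟨fun a b => by simpa using (hK a).trans (hK b).symm⟩
    exact .of_subsingleton
  let V : AddSubgroup K := (nsmulAddMonoidHom p).ker
  obtain ⟨s, hs⟩ := addEmbeds_finsupp_zmod_prime (V := V) fun y => Subtype.ext y.2
  let g : V →+ (ℕ →₀ ZMod (p ^ (n + 1))) :=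
    (Finsupp.mapRange.addMonoidHom (zmodSocleHom p n)).comp s
  have hg : Injective g :=
    (Finsupp.mapRange_injective _ (map_zero _) (zmodSocleHom_injective n)).comp hs
  obtain ⟨h, hh⟩ := exists_extension_finsupp_zmod hK V g
  refine ⟨h, injective_of_forall_nsmul_eq_zero hK h fun y hpy hy => ?_⟩
  rw [hh ⟨y, hpy⟩, map_eq_zero_iff g hg] at hy
  exact congrArg Subtype.val hy

theorem exists_disjoint_zmultiples_ker_zmod (hK : ∀ y : K, p ^ (n + 1) • y = 0) {x : K}
    (hpx : p • x = 0) :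
    ∃ χ : K →+ ZMod (p ^ (n + 1)), Disjoint (zmultiples x) χ.ker := by
  obtain rfl | hx := eq_or_ne x 0
  · exact ⟨0, by simp⟩
  obtain ⟨g, hg⟩ := addEmbeds_finsupp_zmod hK
  obtain ⟨i, hi⟩ : ∃ i, g x i ≠ 0 := by
    by_contra! h
    exact hx ((map_eq_zero_iff g hg).1 (Finsupp.ext h))
  exact ⟨(Finsupp.applyAddHom i).comp g, disjoint_zmultiples_ker hpx _ hi⟩

theorem addEmbeds_directSum_prod_zmod {x : K} (hpx : p • x = 0)
    (hK : ∀ y : K, p ^ n • y ∈ zmultiples x) :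
    AddEmbeds K (DirectSum ℕ (fun _ => ZMod (p ^ n)) × ZMod (p ^ (n + 1))) := by
  obtain ⟨χ, hχ⟩ := exists_disjoint_zmultiples_ker_zmod
    (fun y => pow_succ_nsmul_eq_zero_of_mem_zmultiples hpx (hK y)) hpx
  have : Countable (K ⧸ zmultiples x) := QuotientAddGroup.mk_surjective.countable
  obtain ⟨f, hf⟩ : AddEmbeds (K ⧸ zmultiples x) (DirectSum ℕ fun _ => ZMod (p ^ n)) := by
    refine (addEmbeds_finsupp_zmod ?_).trans (.finsupp_directSum _ _)
    rintro ⟨y⟩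
    exact (QuotientAddGroup.eq_zero_iff _).2 (hK y)
  refine ⟨(f.comp (QuotientAddGroup.mk' _)).prod χ, (injective_iff_map_eq_zero _).2 fun y hy => ?_⟩
  obtain ⟨hfy, hχy⟩ := Prod.ext_iff.1 hy
  have hyx : y ∈ zmultiples x := (QuotientAddGroup.eq_zero_iff y).1 ((map_eq_zero_iff f hf).1 hfy)
  exact AddSubgroup.disjoint_def.1 hχ hyx hχy

end BoundedExponent

section HeightSocle

variable {G Q : Type*} [AddCommGroup G] [AddCommGroup Q] {p m n : ℕ}

theorem map_mem_heightSocle (f : Q →+ G) {y : Q} (hy : y ∈ heightSocle p n Q) :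
    f y ∈ heightSocle p n G := by
  obtain ⟨hpy, z, rfl⟩ := hy
  change p • p ^ n • z = 0 at hpy
  refine ⟨show p • f (p ^ n • z) = 0 from ?_, f z, (map_nsmul f (p ^ n) z).symm⟩
  rw [← map_nsmul, hpy, map_zero]

theorem pow_nsmul_eq_zero_of_heightSocle_eq_bot (hQ : ∀ q : Q, p ^ m • q = 0)
    (h : heightSocle p n Q = ⊥) (q : Q) : p ^ n • q = 0 := by
  by_contra hne
  obtain ⟨k, hk, hpk⟩ := exists_pow_nsmul_ne_zero hne (hQ (p ^ n • q))
  refine hk ((eq_bot_iff_forall _).1 h _ ⟨hpk, p ^ k • q, ?_⟩)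
  rw [nsmulAddMonoidHom_apply, smul_comm]

/-- On the finite group `G[p] ∩ p ^ n G` the embedding of the first factor is already onto. -/
theorem heightSocle_eq_bot_of_prod_addEmbeds [Finite (heightSocle p n G)]
    (h : AddEmbeds (G × Q) G) : heightSocle p n Q = ⊥ := by
  obtain ⟨g, hg⟩ := h
  refine (eq_bot_iff_forall _).2 fun q hq => ?_
  let s : heightSocle p n G → heightSocle p n G := fun y =>
    ⟨g (y, 0), map_mem_heightSocle (g.comp (AddMonoidHom.inl G Q)) y.2⟩
  have hs : Injective s := fun a b hab =>
    Subtype.ext (congrArg Prod.fst (hg (congrArg Subtype.val hab)))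
  obtain ⟨y, hy⟩ := Finite.injective_iff_surjective.1 hs
    ⟨g (0, q), map_mem_heightSocle (g.comp (AddMonoidHom.inr G Q)) hq⟩
  exact (congrArg Prod.snd (hg (congrArg Subtype.val hy))).symm

theorem pow_nsmul_eq_zero_of_prod_addEmbeds [Finite (heightSocle p n G)]
    (hQ : ∀ q : Q, p ^ m • q = 0) (h : AddEmbeds (G × Q) G) (q : Q) : p ^ n • q = 0 :=
  pow_nsmul_eq_zero_of_heightSocle_eq_bot hQ (heightSocle_eq_bot_of_prod_addEmbeds h) q

/-- Divide the images of the generators of `⨁ ZMod p` by `p ^ n` and send the generators of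
`⨁ ZMod (p ^ (n + 1))` there. -/
theorem finsupp_zmod_addEmbeds_of_heightSocle [NeZero p] {ι : Type*}
    (h : AddEmbeds (ι →₀ ZMod p) (heightSocle p n G)) :
    AddEmbeds (ι →₀ ZMod (p ^ (n + 1))) G := by
  obtain ⟨Φ, hΦ⟩ := h
  choose z hz using fun i => (Φ (Finsupp.single i 1)).2.2
  have hpz (i : ι) : p ^ (n + 1) • z i = 0 := by
    rw [pow_succ', mul_smul]
    exact (congrArg (p • ·) (hz i)).trans (Φ (Finsupp.single i 1)).2.1
  let φ : (ι →₀ ZMod (p ^ (n + 1))) →+ G := Finsupp.liftAddHom fun i => zmodHom (z i) (hpz i)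
  have hφ : φ.comp (Finsupp.mapRange.addMonoidHom (zmodSocleHom p n)) =
      (heightSocle p n G).subtype.comp Φ := by
    refine Finsupp.addHom_ext fun i c => ?_
    obtain ⟨a, rfl⟩ := ZMod.intCast_surjective c
    rw [← zsmul_one, ← Finsupp.smul_single, map_zsmul, map_zsmul]
    congr 1
    calc φ (Finsupp.mapRange.addMonoidHom (zmodSocleHom p n) (Finsupp.single i 1))
        = zmodHom (z i) (hpz i) (zmodSocleHom p n 1) := by simp [φ]
      _ = (p ^ n : ℤ) • z i := by rw [← zmodHom_intCast (z i) (hpz i), zmodSocleHom_one]; simp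
      _ = Φ (Finsupp.single i 1) := by rw [← hz i, ← Nat.cast_pow, natCast_zsmul]; rfl
  refine ⟨φ, injective_of_forall_nsmul_eq_zero nsmul_finsupp_zmod_eq_zero φ fun y hpy hy => ?_⟩
  obtain ⟨t, rfl⟩ := mem_range_mapRange_zmodSocleHom hpy
  have hΦt : (Φ t : G) = 0 := (DFunLike.congr_fun hφ t).symm.trans hy
  rw [(map_eq_zero_iff Φ hΦ).1 (ZeroMemClass.coe_eq_zero.1 hΦt), map_zero]

variable [Fact p.Prime]

theorem exists_finite_heightSocle_and_addEmbeds (hG : ∀ y : G, p ^ m • y = 0) :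
    ∃ n, Finite (heightSocle p n G) ∧ AddEmbeds (ℕ →₀ ZMod (p ^ n)) G := by
  have hex : ∃ n, Finite (heightSocle p n G) := by
    refine ⟨m, (Set.finite_singleton (0 : G)).subset ?_⟩
    rintro _ ⟨-, z, rfl⟩
    exact hG z
  classical
  obtain ⟨n, hn, hmin⟩ : ∃ n, Finite (heightSocle p n G) ∧
      ∀ k < n, ¬ Finite (heightSocle p k G) :=
    ⟨Nat.find hex, Nat.find_spec hex, fun k => Nat.find_min hex⟩
  refine ⟨n, hn, ?_⟩
  obtain _ | n := n
  · have : Subsingleton (ZMod (p ^ 0)) := inferInstanceAs (Subsingleton (ZMod 1))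
    exact .of_subsingleton
  · have : Infinite (heightSocle p n G) := not_finite_iff_infinite.1 (hmin n n.lt_succ_self)
    exact finsupp_zmod_addEmbeds_of_heightSocle
      (finsupp_zmod_prime_addEmbeds fun y => Subtype.ext y.2.1)

end HeightSocle

section Main

variable {G : Type*} [AddCommGroup G] [Countable G] {p m : ℕ} [Fact p.Prime]

theorem AddEmbeds.prod_self_or_addBiEmbeddable (hG : ∀ y : G, p ^ m • y = 0) {x : G}
    (hpx : p • x = 0) (h : AddEmbeds (G × (G ⧸ zmultiples x)) G) :
    AddEmbeds (G × G) G ∨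
      ∃ n : ℕ, AddBiEmbeddable G (DirectSum ℕ (fun _ => ZMod (p ^ n)) × ZMod (p ^ (n + 1))) := by
  obtain ⟨n, hfin, hn⟩ := exists_finite_heightSocle_and_addEmbeds hG
  have hmem (y : G) : p ^ n • y ∈ zmultiples x := by
    rw [← QuotientAddGroup.eq_zero_iff, QuotientAddGroup.mk_nsmul]
    exact pow_nsmul_eq_zero_of_prod_addEmbeds (nsmul_quotient_eq_zero hG _) h _
  by_cases hnG : ∀ y : G, p ^ n • y = 0
  · left
    exact (addEmbeds_finsupp_zmod fun y => Prod.ext (hnG y.1) (hnG y.2)).trans hn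
  · right
    obtain ⟨z, hz⟩ := not_forall.1 hnG
    have hpz : p ^ (n + 1) • z = 0 := pow_succ_nsmul_eq_zero_of_mem_zmultiples hpx (hmem z)
    have hcyclic : AddEmbeds (ZMod (p ^ (n + 1))) G :=
      ⟨_, zmodHom_injective z (addOrderOf_eq_prime_pow hz hpz)⟩
    exact ⟨n, addEmbeds_directSum_prod_zmod hpx hmem,
      ((AddEmbeds.directSum_finsupp _ _).prodMap (.of_addEquiv (.refl _))).trans
        (hn.finsupp_prod_of_finite hcyclic)⟩

theorem AddEmbeds.prod_quotient_of_prod_self (hG : ∀ y : G, p ^ m • y = 0)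
    (h : AddEmbeds (G × G) G) (N : AddSubgroup G) : AddEmbeds (G × (G ⧸ N)) G := by
  obtain ⟨n, hfin, hn⟩ := exists_finite_heightSocle_and_addEmbeds hG
  have hnG : ∀ y : G, p ^ n • y = 0 := pow_nsmul_eq_zero_of_prod_addEmbeds hG h
  have : Countable (G ⧸ N) := QuotientAddGroup.mk_surjective.countable
  exact (addEmbeds_finsupp_zmod fun y =>
    Prod.ext (hnG y.1) (nsmul_quotient_eq_zero hnG N y.2)).trans hn

theorem AddBiEmbeddable.exists_prod_quotient_zmultiples {n : ℕ}
    (h : AddBiEmbeddable G (DirectSum ℕ (fun _ => ZMod (p ^ n)) × ZMod (p ^ (n + 1)))) :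
    ∃ x : G, x ≠ 0 ∧ p • x = 0 ∧ AddEmbeds (G × (G ⧸ zmultiples x)) G := by
  obtain ⟨x, hpx, hmem⟩ := h.1.exists_pow_nsmul_mem_zmultiples
  have : Countable (G ⧸ zmultiples x) := QuotientAddGroup.mk_surjective.countable
  refine ⟨x, ?_, hpx, (addEmbeds_directSum_prod_zmod (x := (x, 0)) ?_ ?_).trans h.2⟩
  · rintro rfl
    obtain ⟨g, hg⟩ := h.2
    have hone : p ^ n • (1 : ZMod (p ^ (n + 1))) = 0 := by
      have := hmem (g (0, 1))
      rw [zmultiples_zero_eq_bot, mem_bot, ← map_nsmul, map_eq_zero_iff g hg] at this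
      exact congrArg Prod.snd this
    rw [nsmul_one, ZMod.natCast_eq_zero_iff,
      Nat.pow_dvd_pow_iff_le_right (Fact.out : p.Prime).one_lt] at hone
    exact n.lt_succ_self.not_ge hone
  · rw [Prod.smul_mk, hpx, smul_zero, Prod.mk_zero_zero]
  · rintro ⟨y, q⟩
    obtain ⟨z, rfl⟩ := QuotientAddGroup.mk_surjective q
    obtain ⟨c, hc⟩ := hmem y
    refine ⟨c, Prod.ext hc ?_⟩
    exact (smul_zero c).trans ((QuotientAddGroup.eq_zero_iff _).2 (hmem z)).symm

theorem stmt_11_general [Nontrivial G] (hexp : ∃ k : ℕ, 1 ≤ k ∧ ∀ x : G, k • x = 0)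
    (hord : ∀ x : G, ∃ k : ℕ, addOrderOf x = p ^ k) :
    (∃ x : G, x ≠ 0 ∧ p • x = 0 ∧ AddBiEmbeddable G (G × (G ⧸ zmultiples x))) ↔
      (AddEmbeds (G × G) G ∨
        ∃ n : ℕ, AddBiEmbeddable G (DirectSum ℕ (fun _ => ZMod (p ^ n)) × ZMod (p ^ (n + 1)))) := by
  obtain ⟨m, hG⟩ := exists_pow_nsmul_eq_zero (Fact.out : p.Prime).one_lt hexp hord
  constructor
  · rintro ⟨x, -, hpx, -, h⟩
    exact h.prod_self_or_addBiEmbeddable hG hpx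
  · rintro (h | ⟨n, h⟩)
    · obtain ⟨y, hy⟩ := exists_ne (0 : G)
      obtain ⟨k, hk, hpk⟩ := exists_pow_nsmul_ne_zero hy (hG y)
      exact ⟨p ^ k • y, hk, hpk, .inl, h.prod_quotient_of_prod_self hG _⟩
    · obtain ⟨x, hx, hpx, h⟩ := h.exists_prod_quotient_zmultiples
      exact ⟨x, hx, hpx, .inl, h⟩

end Main

/-- A nontrivial countable abelian 2-group `G` of finite exponent is
bi-embeddable with `G × (G ⧸ ⟨x⟩)` for some involution `x` iff `G × G ↪ G` or `G` is
bi-embeddable with `(⨁_ℕ ZMod (2^n)) × ZMod (2^(n+1))` for some `n`. -/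
theorem stmt_11 (G : Type) [AddCommGroup G] [Countable G] [Nontrivial G]
    (hexp : ∃ k : ℕ, 1 ≤ k ∧ ∀ x : G, k • x = 0)
    (hord : ∀ x : G, ∃ k : ℕ, addOrderOf x = 2 ^ k) :
    (∃ x : G, x ≠ 0 ∧ x + x = 0 ∧
      (∃ f : G →+ G × (G ⧸ AddSubgroup.zmultiples x), Function.Injective f) ∧
      (∃ g : G × (G ⧸ AddSubgroup.zmultiples x) →+ G, Function.Injective g)) ↔
    ((∃ φ : G × G →+ G, Function.Injective φ) ∨
      (∃ n : ℕ,
        (∃ f : G →+ (DirectSum ℕ (fun _ => ZMod (2 ^ n))) × ZMod (2 ^ (n + 1)),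
          Function.Injective f) ∧
        (∃ g : (DirectSum ℕ (fun _ => ZMod (2 ^ n))) × ZMod (2 ^ (n + 1)) →+ G,
          Function.Injective g))) := by
  simpa only [two_nsmul, AddBiEmbeddable, AddEmbeds] using stmt_11_general (p := 2) hexp hord
end

section
/- Every countable abelian group G of finite exponent is bi-embeddable with (⨁_ℕ ZMod n) × H for some n ≥ 1 and some finite abelian group H. -/
/-!
Among the subgroups of finite index choose `K` of least exponent `n`; every finite-index subgroup
of `K` still has exponent `n`. Since `n • K = 0`, the subgroup `N = n • G` is finite, and as `G` is
residually finite some finite-index `L` meets `N` trivially. Then `G` embeds in `G ⧸ N × G ⧸ L`,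
and the countable group `G ⧸ N`, being killed by `n`, embeds in `⨁ ZMod n`.

Conversely, given a finite subgroup `B`, a finite-index subgroup of `K` disjoint from `B` contains
an element of order `n`. Starting from a copy of `G ⧸ L` inside `G`, which exists because finite
abelian groups are self-dual, one adjoins such elements greedily to embed `⨁ ZMod n × G ⧸ L`.
-/

open DirectSum AddSubgroup

theorem exists_injective_hom_zmod_range_eq_zmultiples {M : Type*} [AddCommGroup M] {n : ℕ} {a : M}
    (ha : addOrderOf a = n) :
    ∃ ι : ZMod n →+ M, Function.Injective ι ∧ ι.range = zmultiples a := by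
  subst ha
  let ι : ZMod (addOrderOf a) →+ M :=
    ZMod.lift _ ⟨zmultiplesHom M a, by simp [addOrderOf_nsmul_eq_zero]⟩
  have hι (m : ℤ) : ι m = m • a := ZMod.lift_coe _ _ m
  refine ⟨ι, (ZMod.lift_injective _).2 fun m hm ↦ ?_, ?_⟩
  · rwa [ZMod.intCast_zmod_eq_zero_iff_dvd, addOrderOf_dvd_iff_zsmul_eq_zero]
  · ext x
    rw [AddMonoidHom.mem_range, ZMod.intCast_surjective.exists, mem_zmultiples_iff]
    simp only [hι]

section Characters

variable {M : Type*} [AddCommGroup M] {n : ℕ} [NeZero n]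

theorem exists_toAddCircle_comp_eq (hM : ∀ x : M, n • x = 0) (c : M →+ UnitAddCircle) :
    ∃ χ : M →+ ZMod n, ZMod.toAddCircle.comp χ = c := by
  have mem_range_toAddCircle (x : M) : ∃ z : ZMod n, ZMod.toAddCircle z = c x := by
    have hx : n • c x = 0 := by rw [← map_nsmul, hM, map_zero]
    obtain ⟨m, -, hm⟩ := (AddCircle.nsmul_eq_zero_iff (NeZero.pos n)).1 hx
    exact ⟨m, by rw [ZMod.toAddCircle_natCast, ← hm, mul_one]⟩
  choose χ hχ using mem_range_toAddCircle
  refine ⟨AddMonoidHom.mk' χ fun x y ↦ ZMod.toAddCircle_injective n ?_, AddMonoidHom.ext hχ⟩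
  rw [map_add, hχ, hχ, hχ, map_add]

theorem exists_hom_zmod_addOrderOf_apply_eq (hM : ∀ x : M, n • x = 0) (a : M) :
    ∃ χ : M →+ ZMod n, addOrderOf (χ a) = addOrderOf a := by
  have : NeZero (addOrderOf a) :=
    ⟨(addOrderOf_pos_iff.2 (isOfFinAddOrder_iff_nsmul_eq_zero.2 ⟨n, NeZero.pos n, hM a⟩)).ne'⟩
  obtain ⟨ι, hι, hrange⟩ := exists_injective_hom_zmod_range_eq_zmultiples (a := a) rfl
  obtain ⟨z, hz⟩ : a ∈ ι.range := hrange ▸ mem_zmultiples a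
  have hz_order : addOrderOf z = addOrderOf a := by rw [← addOrderOf_injective ι hι, hz]
  obtain ⟨c, hc⟩ := (Module.Baer.of_divisible UnitAddCircle).extension_property_addMonoidHom
    ι hι ZMod.toAddCircle
  obtain ⟨χ, rfl⟩ := exists_toAddCircle_comp_eq hM c
  have hχ : ZMod.toAddCircle (χ (ι z)) = ZMod.toAddCircle z := DFunLike.congr_fun hc z
  rw [hz] at hχ
  refine ⟨χ, ?_⟩
  rw [← addOrderOf_injective _ (ZMod.toAddCircle_injective n), hχ,
    addOrderOf_injective _ (ZMod.toAddCircle_injective _), hz_order]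

theorem exists_hom_zmod_ker_inf_sup_zmultiples_eq (hM : ∀ x : M, n • x = 0) (B : AddSubgroup M)
    (a : M) : ∃ χ : M →+ ZMod n, χ.ker ⊓ (B ⊔ zmultiples a) = B := by
  have hQ : ∀ x : M ⧸ B, n • x = 0 := by
    rintro ⟨x⟩
    exact congrArg (QuotientAddGroup.mk' B) (hM x)
  obtain ⟨χ, hχ⟩ := exists_hom_zmod_addOrderOf_apply_eq hQ (a : M ⧸ B)
  have hB : ∀ b ∈ B, χ (b : M ⧸ B) = 0 := fun b hb ↦ by
    rw [(QuotientAddGroup.eq_zero_iff b).2 hb, map_zero]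
  refine ⟨χ.comp (QuotientAddGroup.mk' B), le_antisymm ?_ (le_inf hB le_sup_left)⟩
  rintro x ⟨hx, hx'⟩
  obtain ⟨b, hb, _, ⟨m, rfl⟩, rfl⟩ := mem_sup.1 hx'
  have hm : m • χ (a : M ⧸ B) = 0 := by simpa [hB b hb] using hx
  rw [← addOrderOf_dvd_iff_zsmul_eq_zero, hχ, addOrderOf_dvd_iff_zsmul_eq_zero,
    ← QuotientAddGroup.mk_zsmul, QuotientAddGroup.eq_zero_iff] at hm
  exact add_mem hb hm

end Characters

section Filtrations

variable {M : Type*} [AddCommGroup M] {A : ℕ → Type*} [∀ j, AddCommGroup (A j)]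
  {S : ℕ → AddSubgroup M}

theorem exists_injective_directSum_of_ker_inf_eq (hbot : S 0 = ⊥) (hS : ∀ x, ∃ j, x ∈ S j)
    (χ : ∀ j, M →+ A j) (hχ : ∀ j, (χ j).ker ⊓ S (j + 1) = S j) :
    ∃ f : M →+ ⨁ j, A j, Function.Injective f := by
  have hmono : Monotone S := monotone_nat_of_le_succ fun j ↦ hχ j ▸ inf_le_right
  have hker : ∀ j, S j ≤ (χ j).ker := fun j ↦ (hχ j).symm.le.trans inf_le_left
  have exists_coe_eq (x : M) : ∃ v : ⨁ j, A j, ∀ j, v j = χ j x := by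
    obtain ⟨b, hb⟩ := hS x
    refine ⟨DirectSum.mk A (Finset.range b) fun j ↦ χ j x, fun j ↦ ?_⟩
    by_cases hj : j ∈ Finset.range b
    · exact DirectSum.mk_apply_of_mem hj
    · rw [DirectSum.mk_apply_of_notMem hj]
      exact (hker j (hmono (not_lt.1 (Finset.mem_range.not.1 hj)) hb)).symm
  choose f hf using exists_coe_eq
  refine ⟨AddMonoidHom.mk' f fun x y ↦ by ext j; simp [hf], ?_⟩
  refine (injective_iff_map_eq_zero _).2 fun x hx ↦ ?_
  have hχx : ∀ j, χ j x = 0 := fun j ↦ (hf x j).symm.trans (DFunLike.congr_fun hx j)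
  have mem_zero_of_mem : ∀ j, x ∈ S j → x ∈ S 0 := fun j ↦ by
    induction j with
    | zero => exact id
    | succ j ih => exact fun hx ↦ ih (hχ j ▸ ⟨hχx j, hx⟩)
  obtain ⟨b, hb⟩ := hS x
  simpa [hbot] using mem_zero_of_mem b hb

theorem eq_zero_of_toAddMonoid_mem (hmono : Monotone S) (φ : ∀ j, A j →+ M)
    (hφ : ∀ j, Function.Injective (φ j)) (hrange : ∀ j, (φ j).range ≤ S (j + 1))
    (hdisj : ∀ j, Disjoint (S j) (φ j).range) {v : ⨁ j, A j} (hv : toAddMonoid φ v ∈ S 0) :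
    v = 0 := by
  classical
  by_contra hne
  have hsupp : v.support.Nonempty :=
    Finset.nonempty_iff_ne_empty.2 fun h ↦ hne (DFinsupp.support_eq_empty.1 h)
  have hmax := v.support.max'_mem hsupp
  set j := v.support.max' hsupp
  have hsum : toAddMonoid φ v = ∑ l ∈ v.support, φ l (v l) := DFinsupp.sumAddHom_apply φ v
  have hlower : ∑ l ∈ v.support.erase j, φ l (v l) ∈ S j := sum_mem fun l hl ↦
    hmono (Nat.succ_le_of_lt (Finset.lt_max'_of_mem_erase_max' _ hsupp hl)) (hrange l ⟨v l, rfl⟩)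
  rw [hsum, ← Finset.add_sum_erase _ _ hmax] at hv
  have htop : φ j (v j) ∈ S j := (add_mem_cancel_right hlower).1 (hmono (Nat.zero_le j) hv)
  exact DFinsupp.mem_support_iff.1 hmax <|
    (map_eq_zero_iff (φ j) (hφ j)).1 (disjoint_def.1 (hdisj j) htop ⟨v j, rfl⟩)

end Filtrations

theorem exists_injective_directSum_zmod {M : Type*} [AddCommGroup M] [Countable M] {n : ℕ}
    [NeZero n] (hM : ∀ x : M, n • x = 0) :
    ∃ f : M →+ ⨁ _ : ℕ, ZMod n, Function.Injective f := by
  obtain ⟨u, hu⟩ := exists_surjective_nat M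
  let S (j : ℕ) : AddSubgroup M := closure (u '' Set.Iio j)
  have hS_succ (j : ℕ) : S (j + 1) = S j ⊔ zmultiples (u j) := by
    simp only [S, ← Order.succ_eq_add_one, Order.Iio_succ_eq_insert, Set.image_insert_eq]
    rw [Set.insert_eq, AddSubgroup.closure_union, sup_comm, zmultiples_eq_closure]
  have hS_mem (x : M) : ∃ j, x ∈ S j := by
    obtain ⟨j, rfl⟩ := hu x
    exact ⟨j + 1, subset_closure ⟨j, Nat.lt_succ_self j, rfl⟩⟩
  choose χ hχ using fun j ↦ exists_hom_zmod_ker_inf_sup_zmultiples_eq hM (S j) (u j)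
  exact exists_injective_directSum_of_ker_inf_eq (by simp [S]) hS_mem χ
    fun j ↦ by rw [hS_succ, hχ]

section Torsion

theorem finite_of_isAddTorsion_of_fg {G : Type*} [AddCommGroup G] (hG : IsAddTorsion G)
    {B : AddSubgroup G} (hB : B.FG) : Finite B :=
  have : AddGroup.FG B := (AddGroup.fg_iff_addSubgroup_fg B).2 hB
  AddCommGroup.finite_of_fg_isAddTorsion B (hG.addSubgroup B)

theorem exists_injective_hom_of_surjective_of_finite {A Q : Type*} [AddCommGroup A]
    [AddCommGroup Q] [Finite A] (π : A →+ Q) (hπ : Function.Surjective π) :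
    ∃ i : Q →+ A, Function.Injective i := by
  have : Finite Q := .of_surjective π hπ
  obtain ⟨eA⟩ := CommGroup.monoidHom_mulEquiv_of_hasEnoughRootsOfUnity (Multiplicative A) ℂ
  obtain ⟨eQ⟩ := CommGroup.monoidHom_mulEquiv_of_hasEnoughRootsOfUnity (Multiplicative Q) ℂ
  let dual := MonoidHom.compHom' (P := ℂˣ) (AddMonoidHom.toMultiplicative π)
  have hdual : Function.Injective dual := fun _ _ h ↦ (MonoidHom.cancel_right hπ).1 h
  exact ⟨AddMonoidHom.toMultiplicative.symm
    (eA.toMonoidHom.comp (dual.comp eQ.symm.toMonoidHom)),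
    eA.injective.comp (hdual.comp eQ.symm.injective)⟩

theorem exists_injective_hom_of_surjective_of_isAddTorsion {G Q : Type*} [AddCommGroup G]
    [AddCommGroup Q] [Finite Q] (hG : IsAddTorsion G) (π : G →+ Q) (hπ : Function.Surjective π) :
    ∃ i : Q →+ G, Function.Injective i := by
  let A : AddSubgroup G := closure (Set.range (Function.surjInv hπ))
  have : Finite A := finite_of_isAddTorsion_of_fg hG
    ((fg_iff A).2 ⟨_, rfl, Set.finite_range _⟩)
  obtain ⟨i, hi⟩ := exists_injective_hom_of_surjective_of_finite (π.comp A.subtype) fun q ↦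
    ⟨⟨_, subset_closure ⟨q, rfl⟩⟩, Function.surjInv_eq hπ q⟩
  exact ⟨A.subtype.comp i, A.subtype_injective.comp hi⟩

theorem exists_seq_sup_zmultiples {G : Type*} [AddCommGroup G] (hG : IsAddTorsion G)
    {P : AddSubgroup G → G → Prop} (hP : ∀ B : AddSubgroup G, Finite B → ∃ x, P B x)
    (B : AddSubgroup G) [Finite B] :
    ∃ (S : ℕ → AddSubgroup G) (x : ℕ → G), S 0 = B ∧
      ∀ j, S (j + 1) = S j ⊔ zmultiples (x j) ∧ P (S j) (x j) := by
  choose pick hpick using hP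
  let adjoin (C : {C : AddSubgroup G // Finite C}) : {C : AddSubgroup G // Finite C} :=
    ⟨C.1 ⊔ zmultiples (pick C.1 C.2), finite_of_isAddTorsion_of_fg hG <|
      have := C.2
      ((AddGroup.fg_iff_addSubgroup_fg C.1).1 inferInstance).sup
        ((fg_iff _).2 ⟨{pick C.1 C.2}, (zmultiples_eq_closure _).symm, Set.finite_singleton _⟩)⟩
  let S (j : ℕ) := adjoin^[j] ⟨B, ‹_›⟩
  refine ⟨fun j ↦ (S j).1, fun j ↦ pick (S j).1 (S j).2, rfl, fun j ↦ ⟨?_, hpick _ _⟩⟩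
  simp only [S, Function.iterate_succ_apply', adjoin]

theorem exists_injective_directSum_zmod_prod {G H : Type*} [AddCommGroup G] [AddCommGroup H]
    [Finite H] (hG : IsAddTorsion G) {n : ℕ}
    (hn : ∀ B : AddSubgroup G, Finite B → ∃ x, addOrderOf x = n ∧ Disjoint B (zmultiples x))
    (i : H →+ G) (hi : Function.Injective i) :
    ∃ g : (⨁ _ : ℕ, ZMod n) × H →+ G, Function.Injective g := by
  have : Finite i.range := inferInstanceAs (Finite (Set.range i))
  obtain ⟨S, x, hS_zero, hS⟩ := exists_seq_sup_zmultiples hG hn i.range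
  choose hS_succ hx hdisj using hS
  choose φ hφ hφ_range using fun j ↦ exists_injective_hom_zmod_range_eq_zmultiples (hx j)
  have eq_zero_of_mem {v : ⨁ _ : ℕ, ZMod n} (hv : toAddMonoid φ v ∈ i.range) : v = 0 :=
    eq_zero_of_toAddMonoid_mem (monotone_nat_of_le_succ fun j ↦ hS_succ j ▸ le_sup_left) φ hφ
      (fun j ↦ by rw [hφ_range, hS_succ]; exact le_sup_right)
      (fun j ↦ hφ_range j ▸ hdisj j) (hS_zero ▸ hv)
  refine ⟨(toAddMonoid φ).coprod i, (injective_iff_map_eq_zero _).2 ?_⟩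
  rintro ⟨v, h⟩ (hvh : toAddMonoid φ v + i h = 0)
  obtain rfl : v = 0 := eq_zero_of_mem ⟨-h, by rw [map_neg, eq_neg_of_add_eq_zero_left hvh]⟩
  rw [map_zero, zero_add] at hvh
  rw [(map_eq_zero_iff i hi).1 hvh, Prod.mk_zero_zero]

end Torsion

theorem finite_range_of_le_ker {G G' : Type*} [AddGroup G] [AddGroup G'] {K : AddSubgroup G}
    [K.FiniteIndex] {f : G →+ G'} (hK : K ≤ f.ker) : Finite f.range :=
  have : f.ker.FiniteIndex := finiteIndex_of_le hK
  .of_equiv _ (QuotientAddGroup.quotientKerEquivRange f).toEquiv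

section FiniteExponent

open AddMonoid

variable {G : Type*} [AddCommGroup G]

theorem exponentExists_addSubgroup (hG : ExponentExists G) (K : AddSubgroup G) :
    ExponentExists K :=
  exponent_ne_zero.1 <| ne_zero_of_dvd_ne_zero (exponent_ne_zero.2 hG) <|
    exponent_dvd_of_addMonoidHom K.subtype K.subtype_injective

theorem exists_finiteIndex_disjoint (hG : ExponentExists G) (B : AddSubgroup G) [Finite B] :
    ∃ L : AddSubgroup G, L.FiniteIndex ∧ Disjoint B L := by
  have : NeZero (exponent G) := ⟨hG.exponent_ne_zero⟩
  choose χ hχ using exists_hom_zmod_addOrderOf_apply_eq (exponent_nsmul_eq_zero (G := G))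
  refine ⟨⨅ b : B, (χ b).ker, finiteIndex_iInf fun _ ↦ inferInstance, disjoint_def.2 ?_⟩
  intro b hb hbL
  have hb_zero : χ b b = 0 := mem_iInf.1 hbL ⟨b, hb⟩
  rw [← AddMonoid.addOrderOf_eq_one_iff, ← hχ b, hb_zero, addOrderOf_zero]

theorem exists_finiteIndex_forall_exponent_eq (hG : ExponentExists G) :
    ∃ K : AddSubgroup G, K.FiniteIndex ∧
      ∀ L ≤ K, L.FiniteIndex → exponent L = exponent K := by
  obtain ⟨K, hK, hmin⟩ := exists_minimalFor_of_wellFoundedLT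
    (fun K : AddSubgroup G ↦ K.FiniteIndex) (fun K ↦ exponent K) ⟨⊤, inferInstance⟩
  refine ⟨K, hK, fun L hLK hL ↦ ?_⟩
  have hle : exponent L ≤ exponent K := Nat.le_of_dvd (exponentExists_addSubgroup hG K).exponent_pos
    (exponent_dvd_of_addMonoidHom (inclusion hLK) (inclusion_injective hLK))
  exact hle.antisymm (hmin hL hle)

theorem exists_addOrderOf_eq_exponent_disjoint (hG : ExponentExists G) {K : AddSubgroup G}
    [K.FiniteIndex] (hK : ∀ L ≤ K, L.FiniteIndex → exponent L = exponent K)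
    (B : AddSubgroup G) [Finite B] :
    ∃ x, addOrderOf x = exponent K ∧ Disjoint B (zmultiples x) := by
  obtain ⟨L, hL, hBL⟩ := exists_finiteIndex_disjoint hG B
  obtain ⟨x, hx⟩ := exists_addOrderOf_eq_exponent (exponentExists_addSubgroup hG (K ⊓ L))
  refine ⟨x, ?_, hBL.mono_right (zmultiples_le.2 x.2.2)⟩
  rw [addOrderOf_coe, hx, hK _ inf_le_left inferInstance]

theorem exists_finiteIndex_injective_prod_quotient [Countable G] (hG : ExponentExists G)
    (K : AddSubgroup G) [K.FiniteIndex] :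
    ∃ L : AddSubgroup G, L.FiniteIndex ∧
      ∃ f : G →+ (⨁ _ : ℕ, ZMod (exponent K)) × (G ⧸ L), Function.Injective f := by
  have : NeZero (exponent K) := ⟨(exponentExists_addSubgroup hG K).exponent_ne_zero⟩
  let N : AddSubgroup G := (nsmulAddMonoidHom (exponent K)).range
  have : Finite N := finite_range_of_le_ker (K := K) fun x hx ↦ nsmul_exponent_eq_zero hx
  have hN : ∀ x : G ⧸ N, exponent K • x = 0 := by
    rintro ⟨x⟩
    exact (QuotientAddGroup.eq_zero_iff _).2 ⟨x, rfl⟩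
  have : Countable (G ⧸ N) := (QuotientAddGroup.mk'_surjective N).countable
  obtain ⟨ψ, hψ⟩ := exists_injective_directSum_zmod hN
  obtain ⟨L, hL, hNL⟩ := exists_finiteIndex_disjoint hG N
  refine ⟨L, hL, (ψ.comp (QuotientAddGroup.mk' N)).prod (QuotientAddGroup.mk' L), ?_⟩
  refine (injective_iff_map_eq_zero _).2 fun x hx ↦ ?_
  obtain ⟨hxN, hxL⟩ := Prod.ext_iff.1 hx
  exact disjoint_def.1 hNL
    ((QuotientAddGroup.eq_zero_iff x).1 ((map_eq_zero_iff ψ hψ).1 hxN))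
    ((QuotientAddGroup.eq_zero_iff x).1 hxL)

end FiniteExponent

/-- Every countable abelian group of finite exponent is bi-embeddable with
`(⨁_ℕ ZMod n) × H` for some `n ≥ 1` and some finite abelian group `H`. -/
theorem stmt_13 (G : Type) [AddCommGroup G] [Countable G]
    (hexp : ∃ k : ℕ, 1 ≤ k ∧ ∀ x : G, k • x = 0) :
    ∃ (n : ℕ) (H : Type) (instH : AddCommGroup H), 1 ≤ n ∧ Finite H ∧
      (letI := instH
       (∃ f : G →+ (DirectSum ℕ (fun _ => ZMod n)) × H, Function.Injective f) ∧
       (∃ g : (DirectSum ℕ (fun _ => ZMod n)) × H →+ G, Function.Injective g)) := by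
  have hG : AddMonoid.ExponentExists G := hexp
  have htorsion : IsAddTorsion G := ExponentExists.isAddTorsion hG
  obtain ⟨K, _, hK⟩ := exists_finiteIndex_forall_exponent_eq hG
  obtain ⟨L, _, hf⟩ := exists_finiteIndex_injective_prod_quotient hG K
  obtain ⟨i, hi⟩ := exists_injective_hom_of_surjective_of_isAddTorsion htorsion
    (QuotientAddGroup.mk' L) (QuotientAddGroup.mk'_surjective L)
  have hg := exists_injective_directSum_zmod_prod htorsion
    (fun B _ ↦ exists_addOrderOf_eq_exponent_disjoint hG hK B) i hi
  exact ⟨AddMonoid.exponent K, G ⧸ L, inferInstance,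
    (exponentExists_addSubgroup hG K).exponent_pos, inferInstance, hf, hg⟩
end
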